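/- arXiv:1111.2874 — 5 statements merged into one kernel-verified Lean document; each statement's English description precedes it below -/
import Mathlib

section
/- For every integer k ≥ 3 there exists a holomorphic automorphism F of ℂ^k (a bijective holomorphic map with holomorphic inverse) which is tangent to the identity at the origin, i.e. F(0) = 0 and DF(0) = Id, such that its basin of attraction Ω = {p ∈ ℂ^k \ {0} : F^n(p) → 0 as n → ∞} is biholomorphic to (ℂ*)^(k−2) × ℂ², where ℂ* = ℂ \ {0}. -/
open Filter Set

/-!
The basin is produced in dimension two and then lifted.

In the plane, an automorphism `G`, composed of shears, an overshear and the time one map of a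
parabolic flow, fixes the line `u = 0` pointwise. In the coordinates `ζ = 1 / u`,
`w = y / u ^ (3 / 2)` it is close to the translation `(ζ, w) ↦ (ζ + 1, w)` on petals: the errors are
dominated by the decrease of a quantity of order `(Re ζ) ^ (-1 / 2)` along the orbit, so they are
summable. Every orbit which tends to the origin off the line `u = 0` enters all the petals, with `w`
bounded: the approximate translation `1 / u ↦ 1 / u + 1` pushes `ζ` to the right, and then
`y ↦ y - 3 / 2 u y` keeps `y / u` bounded. Hence `G ^ n` followed by the coordinates and by the
translation by `(-n, 0)` converges to Fatou coordinates, holomorphic by the Weierstrass theorem,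
which conjugate `G` on its basin to the translation by `(1, 0)`. Deep inside the petals the Fatou
coordinates differ from `(ζ, w)` by a map with small derivative, hence form an injective chart with
a large image. Following orbits forwards gives their injectivity on the basin, and pulling points
back by the inverse of `G` gives their surjectivity onto `ℂ²`, with holomorphic local sections.

For the lift to `ℂ^(m + 2)` with coordinates `(y, x₀, …, x_m)`, put `u = x₀ ⋯ x_m`. As `G`
multiplies `u` by `e ^ v` for an entire function `v`, multiplying each `x_i` by `e ^ (v / (m + 1))`
defines an automorphism over `G`; it is tangent to the identity because `v` vanishes at the origin.
The quotients `x_i ^ (m + 1) / u` are invariant, so a point with `u ≠ 0` is attracted to the origin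
exactly when `(u, y)` is, while points with `u = 0` are fixed. The basin is thus the preimage of the
planar one, and `x₁, …, x_m` and the Fatou coordinates of `(u, y)` identify it with
`(ℂ*)^m × ℂ²`.
-/

namespace ParabolicBasin

open Topology Metric Asymptotics
open Complex (exp log)

/-! ### Basins of attraction and biholomorphisms -/

/-- The basin of attraction of the origin under `F`; the origin itself is not included. -/
def basinOfAttraction {E : Type*} [Zero E] [TopologicalSpace E] (F : E → E) : Set E :=
  {p | p ≠ 0 ∧ Tendsto (fun n => F^[n] p) atTop (𝓝 0)}

section Basin

variable {E : Type*} [Zero E] [TopologicalSpace E] {F : E → E} {p : E}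

theorem notMem_basinOfAttraction_of_isFixedPt [T2Space E] (h : F.IsFixedPt p) :
    p ∉ basinOfAttraction F := by
  rintro ⟨hp, hlim⟩
  simp only [Function.iterate_fixed h] at hlim
  exact hp (tendsto_nhds_unique tendsto_const_nhds hlim)

theorem iterate_mem_basinOfAttraction (hF : F.Injective) (h0 : F 0 = 0)
    (h : p ∈ basinOfAttraction F) (n : ℕ) : F^[n] p ∈ basinOfAttraction F := by
  refine ⟨fun hn => h.1 (hF.iterate n (by rw [hn, Function.iterate_fixed h0])), ?_⟩
  simp only [← Function.iterate_add_apply]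
  exact h.2.comp (tendsto_add_atTop_nat n)

theorem mem_basinOfAttraction_of_iterate (h0 : F 0 = 0) {n : ℕ}
    (h : F^[n] p ∈ basinOfAttraction F) : p ∈ basinOfAttraction F := by
  refine ⟨fun hp => h.1 (by rw [hp, Function.iterate_fixed h0]), ?_⟩
  rw [← tendsto_add_atTop_iff_nat n]
  simpa only [Function.iterate_add_apply] using h.2

end Basin

section Biholomorphism

variable {E F G : Type*} [NormedAddCommGroup E] [NormedSpace ℂ E] [NormedAddCommGroup F]
  [NormedSpace ℂ F] [NormedAddCommGroup G] [NormedSpace ℂ G]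

/-- `Φ` maps `U` biholomorphically onto `V`, with inverse `Ψ`; the values of `Φ` and `Ψ`
outside `U` and `V` are irrelevant. -/
structure IsBiholomorphism (Φ : E → F) (Ψ : F → E) (U : Set E) (V : Set F) : Prop where
  differentiableOn : DifferentiableOn ℂ Φ U
  differentiableOn_inv : DifferentiableOn ℂ Ψ V
  mapsTo : MapsTo Φ U V
  mapsTo_inv : MapsTo Ψ V U
  invOn : InvOn Ψ Φ U V

namespace IsBiholomorphism

theorem bijOn {Φ : E → F} {Ψ : F → E} {U : Set E} {V : Set F} (h : IsBiholomorphism Φ Ψ U V) :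
    BijOn Φ U V :=
  h.invOn.bijOn h.mapsTo h.mapsTo_inv

theorem trans {Φ : E → F} {Ψ : F → E} {Φ' : F → G} {Ψ' : G → F} {U : Set E} {V : Set F}
    {W : Set G} (h : IsBiholomorphism Φ Ψ U V) (h' : IsBiholomorphism Φ' Ψ' V W) :
    IsBiholomorphism (Φ' ∘ Φ) (Ψ ∘ Ψ') U W where
  differentiableOn := h'.differentiableOn.comp h.differentiableOn h.mapsTo
  differentiableOn_inv := h.differentiableOn_inv.comp h'.differentiableOn_inv h'.mapsTo_inv
  mapsTo := h'.mapsTo.comp h.mapsTo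
  mapsTo_inv := h.mapsTo_inv.comp h'.mapsTo_inv
  invOn := h.invOn.comp h'.invOn h.mapsTo h'.mapsTo_inv

theorem prodMap_id {Φ : E → F} {Ψ : F → E} {U : Set E} {V : Set F}
    (h : IsBiholomorphism Φ Ψ U V) (W : Set G) :
    IsBiholomorphism (Prod.map id Φ) (Prod.map id Ψ) (W ×ˢ U) (W ×ˢ V) where
  differentiableOn := differentiableOn_fst.prodMk
    (h.differentiableOn.comp differentiableOn_snd fun _ hx => hx.2)
  differentiableOn_inv := differentiableOn_fst.prodMk
    (h.differentiableOn_inv.comp differentiableOn_snd fun _ hx => hx.2)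
  mapsTo := fun _ hx => ⟨hx.1, h.mapsTo hx.2⟩
  mapsTo_inv := fun _ hx => ⟨hx.1, h.mapsTo_inv hx.2⟩
  invOn := ⟨fun _ hx => Prod.ext rfl (h.invOn.1 hx.2), fun _ hx => Prod.ext rfl (h.invOn.2 hx.2)⟩

end IsBiholomorphism

theorem exists_isBiholomorphism_of_local_sections {Φ : E → F} {U : Set E} {V : Set F}
    (hΦ : DifferentiableOn ℂ Φ U) (hinj : InjOn Φ U) (hmaps : MapsTo Φ U V)
    (hsec : ∀ q ∈ V, ∃ σ : F → E, DifferentiableAt ℂ σ q ∧ ∀ᶠ z in 𝓝 q, σ z ∈ U ∧ Φ (σ z) = z) :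
    ∃ Ψ, IsBiholomorphism Φ Ψ U V := by
  have hsurj : SurjOn Φ U V := fun q hq =>
    have ⟨σ, _, hσ⟩ := hsec q hq
    ⟨σ q, hσ.self_of_nhds⟩
  have hbij : BijOn Φ U V := ⟨hmaps, hinj, hsurj⟩
  refine ⟨Function.invFunOn Φ U, hΦ, fun q hq => ?_, hmaps, hsurj.mapsTo_invFunOn,
    hbij.invOn_invFunOn⟩
  obtain ⟨σ, hσ, hσU⟩ := hsec q hq
  refine (hσ.congr_of_eventuallyEq ?_).differentiableWithinAt
  filter_upwards [hσU] with z hz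
  have hmem : z ∈ Φ '' U := ⟨σ z, hz⟩
  exact hinj (Function.invFunOn_mem hmem) hz.1 ((Function.invFunOn_eq hmem).trans hz.2.symm)

end Biholomorphism

/-! ### Holomorphic maps between Banach spaces -/

section Banach

variable {E F : Type*} [NormedAddCommGroup E] [NormedSpace ℂ E] [NormedAddCommGroup F]
  [NormedSpace ℂ F]

theorem norm_fderiv_le_of_forall_norm_le {f : E → F} {x : E} {r ε : ℝ} (hr : 0 < r)
    (hf : DifferentiableOn ℂ f (ball x r)) (hε : ∀ y ∈ ball x r, ‖f y‖ ≤ ε) :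
    ‖fderiv ℂ f x‖ ≤ 2 * ε / r := by
  refine Complex.norm_fderiv_le_div_of_mapsTo_ball hf (fun y hy => ?_) hr
  rw [mem_closedBall, dist_eq_norm]
  linarith [norm_sub_le (f y) (f x), hε y hy, hε x (mem_ball_self hr)]

variable {ι : Type*} {l : Filter ι} {f : ι → E → F} {U : Set E}

theorem uniformCauchySeqOn_fderiv {s : Set E} {r : ℝ} (hr : 0 < r)
    (hsU : ∀ x ∈ s, ball x r ⊆ U) (hf : ∀ n, DifferentiableOn ℂ (f n) U)
    (hlim : UniformCauchySeqOn f l U) :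
    UniformCauchySeqOn (fun n => fderiv ℂ (f n)) l s := by
  intro u hu
  obtain ⟨ε, hε, hεu⟩ := Metric.mem_uniformity_dist.1 hu
  filter_upwards [hlim _ (Metric.dist_mem_uniformity (by positivity : 0 < r * ε / 4))]
    with n hn x hx
  have hdiff (i : ι) : DifferentiableOn ℂ (f i) (ball x r) := (hf i).mono (hsU x hx)
  have hat (i : ι) : DifferentiableAt ℂ (f i) x :=
    (hdiff i).differentiableAt (ball_mem_nhds x hr)
  apply hεu
  rw [dist_eq_norm, ← fderiv_sub (hat n.1) (hat n.2)]
  calc ‖fderiv ℂ (f n.1 - f n.2) x‖ ≤ 2 * (r * ε / 4) / r := by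
        refine norm_fderiv_le_of_forall_norm_le hr ((hdiff n.1).sub (hdiff n.2)) fun y hy => ?_
        simpa [dist_eq_norm] using (hn y (hsU x hx hy)).le
    _ < ε := by rw [div_lt_iff₀ hr]; nlinarith [mul_pos hr hε]

/-- The Weierstrass theorem: by the Cauchy estimates the derivatives converge uniformly as well. -/
theorem differentiableOn_of_tendstoUniformlyOn [CompleteSpace F] [l.NeBot] {g : E → F}
    (hU : IsOpen U) (hf : ∀ n, DifferentiableOn ℂ (f n) U) (hlim : TendstoUniformlyOn f g l U) :
    DifferentiableOn ℂ g U := by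
  intro x hx
  obtain ⟨r, hr, hball⟩ : ∃ r > 0, ball x (2 * r) ⊆ U := by
    obtain ⟨r, hr, h⟩ := Metric.isOpen_iff.1 hU x hx
    exact ⟨r / 2, by positivity, by simpa [mul_div_cancel₀] using h⟩
  have hsub : ∀ y ∈ ball x r, ball y r ⊆ U := fun y hy =>
    (ball_subset_ball' (by linarith [mem_ball.1 hy])).trans hball
  have hmem : ∀ y ∈ ball x r, y ∈ U := fun y hy => hsub y hy (mem_ball_self hr)
  have hcauchy := uniformCauchySeqOn_fderiv hr hsub hf hlim.uniformCauchySeqOn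
  have hlim_fderiv : ∀ y, ∃ L, y ∈ ball x r → Tendsto (fun n => fderiv ℂ (f n) y) l (𝓝 L) :=
    fun y => by
      by_cases hy : y ∈ ball x r
      · exact (CompleteSpace.complete (hcauchy.cauchy_map hy)).imp fun _ h _ => h
      · exact ⟨0, fun h => absurd h hy⟩
  choose g' hg' using hlim_fderiv
  have hg := hasFDerivAt_of_tendstoUniformlyOn isOpen_ball
    (hcauchy.tendstoUniformlyOn_of_tendsto hg')
    (fun n y hy => ((hf n).differentiableAt (hU.mem_nhds (hmem y hy))).hasFDerivAt)
    (fun y hy => hlim.tendsto_at (hmem y hy)) (mem_ball_self hr)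
  exact hg.differentiableAt.differentiableWithinAt

variable [CompleteSpace E]

theorem exists_equiv_coe_eq_of_norm_sub_id_lt {A : E →L[ℂ] E}
    (hA : ‖A - ContinuousLinearMap.id ℂ E‖ < 1) : ∃ A' : E ≃L[ℂ] E, (A' : E →L[ℂ] E) = A := by
  rw [norm_sub_rev] at hA
  refine ⟨ContinuousLinearEquiv.unitsEquiv ℂ E (Units.oneSub _ hA), ?_⟩
  ext x
  simp

/-- By the Cauchy estimates the derivative of `f - id` is at most `1 / 2`, so that the inverse
function theorem applies on the whole of `V`. -/
theorem exists_openPartialHomeomorph_of_norm_sub_le [Nontrivial E] {f : E → E} {U V : Set E}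
    {r ε : ℝ} (hr : 0 < r) (hV : IsOpen V) (hVc : Convex ℝ V) (hVU : ∀ x ∈ V, ball x r ⊆ U)
    (hf : DifferentiableOn ℂ f U) (hfε : ∀ x ∈ U, ‖f x - x‖ ≤ ε) (hε : 4 * ε ≤ r) :
    ∃ e : OpenPartialHomeomorph E E, e.source = V ∧ ⇑e = f ∧
      DifferentiableOn ℂ e.symm e.target ∧ ∀ b, closedBall b (r / 2) ⊆ V → b ∈ e.target := by
  have hdf : ∀ x ∈ V, DifferentiableAt ℂ f x := fun x hx =>
    (hf.mono (hVU x hx)).differentiableAt (ball_mem_nhds x hr)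
  have hderiv : ∀ x ∈ V, ‖fderiv ℂ f x - ContinuousLinearMap.id ℂ E‖ ≤ 1 / 2 := fun x hx => by
    rw [← fderiv_id, ← fderiv_sub (hdf x hx) differentiableAt_id]
    refine (norm_fderiv_le_of_forall_norm_le hr ((hf.mono (hVU x hx)).sub differentiableOn_id)
      fun y hy => hfε y (hVU x hx hy)).trans ?_
    rw [div_le_iff₀ hr]
    linarith
  have happrox : ApproximatesLinearOn f (ContinuousLinearEquiv.refl ℂ E : E →L[ℂ] E) V (1 / 2) :=
    fun x hx y hy => by
      simpa using hVc.norm_image_sub_le_of_norm_fderiv_le' hdf hderiv hy hx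
  have hnorm : ‖((ContinuousLinearEquiv.refl ℂ E).symm : E →L[ℂ] E)‖₊ = 1 :=
    ContinuousLinearMap.nnnorm_id
  have hc : (1 / 2 : NNReal) < ‖((ContinuousLinearEquiv.refl ℂ E).symm : E →L[ℂ] E)‖₊⁻¹ := by
    rw [hnorm, inv_one]
    exact half_lt_self one_pos
  set e := happrox.toOpenPartialHomeomorph f V (.inr hc) hV
  refine ⟨e, rfl, rfl, fun y hy => ?_, fun b hb => ?_⟩
  · have hx := e.map_target hy
    obtain ⟨A, hA⟩ := exists_equiv_coe_eq_of_norm_sub_id_lt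
      ((hderiv _ hx).trans_lt one_half_lt_one)
    have hfd : HasFDerivAt e (A : E →L[ℂ] E) (e.symm y) := hA ▸ (hdf _ hx).hasFDerivAt
    exact (e.hasFDerivAt_symm hy hfd).differentiableAt.differentiableWithinAt
  · refine happrox.closedBall_subset_target (.inr hc) hV (by positivity) hb ?_
    have hbU : b ∈ U :=
      hVU b (hb (mem_closedBall_self (by positivity))) (mem_ball_self hr)
    rw [hnorm, mem_closedBall, dist_comm, dist_eq_norm]
    push_cast
    linarith [hfε b hbU]

end Banach

/-! ### Real sequences -/

theorem dist_le_sub_of_dist_le_sub_succ {α : Type*} [PseudoMetricSpace α] {a : ℕ → α} {b : ℕ → ℝ}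
    (h : ∀ n, dist (a n) (a (n + 1)) ≤ b n - b (n + 1)) {n m : ℕ} (hnm : n ≤ m) :
    dist (a n) (a m) ≤ b n - b m := by
  rw [show b n - b m = -b m - -b n by ring, ← Finset.sum_Ico_sub (fun k => -b k) hnm]
  exact dist_le_Ico_sum_of_dist_le hnm fun _ _ => (h _).trans_eq (neg_sub_neg _ _).symm

theorem tendsto_atTop_of_eventually_add_le {a : ℕ → ℝ} {c : ℝ} (hc : 0 < c)
    (h : ∀ᶠ n in atTop, a n + c ≤ a (n + 1)) : Tendsto a atTop atTop := by
  obtain ⟨N, hN⟩ := eventually_atTop.1 h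
  have hlower (n : ℕ) : a N + n * c ≤ a (n + N) := by
    induction n with
    | zero => simp
    | succ n ih =>
      have := hN (n + N) (Nat.le_add_left N n)
      rw [Nat.add_right_comm]
      push_cast
      linarith
  rw [← tendsto_add_atTop_iff_nat N]
  exact tendsto_atTop_mono hlower
    (tendsto_atTop_add_const_left _ _ (tendsto_natCast_atTop_atTop.atTop_mul_const hc))

theorem mul_sqrt_le_inv_sqrt_sub_inv_sqrt {r x : ℝ} (hx : 1 ≤ x) (hr : r ≤ x⁻¹) :
    r * √r ≤ 12 * ((√x)⁻¹ - (√(x + 1 / 2))⁻¹) := by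
  have hx0 : 0 < x := by linarith
  set a := √x with ha
  set b := √(x + 1 / 2)
  have ha0 : 0 < a := Real.sqrt_pos.2 hx0
  have haa : a * a = x := Real.mul_self_sqrt hx0.le
  have hbb : b * b = x + 1 / 2 := Real.mul_self_sqrt (by linarith)
  have hb0 : 0 < b := Real.sqrt_pos.2 (by linarith)
  have hab : a ≤ b := Real.sqrt_le_sqrt (by linarith)
  have hb2 : b ≤ 2 * a := by
    refine Real.sqrt_le_iff.2 ⟨by positivity, ?_⟩
    linarith [mul_self_nonneg a]
  calc r * √r ≤ x⁻¹ * √x⁻¹ := by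
        gcongr
    _ = (a * a * a)⁻¹ := by
        rw [Real.sqrt_inv, ← ha, ← haa]
        field_simp
    _ ≤ 6 * (a * b * (a + b))⁻¹ := by
        rw [← div_eq_mul_inv, ← one_div, div_le_div_iff₀ (by positivity) (by positivity)]
        have : b * (a + b) ≤ 6 * a * a := by nlinarith [hab]
        nlinarith
    _ = 12 * (a⁻¹ - b⁻¹) := by
        have hdiff : b - a = (2 * (a + b))⁻¹ := by
          rw [← one_div, eq_div_iff (by positivity)]
          linarith
        rw [inv_sub_inv ha0.ne' hb0.ne', hdiff]
        field_simp
        norm_num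

/-! ### The planar automorphism -/

/-- The shear `(u, y) ↦ (u, y + c u)`. -/
def shear (c : ℂ) : Equiv.Perm (ℂ × ℂ) where
  toFun p := (p.1, p.2 + c * p.1)
  invFun p := (p.1, p.2 - c * p.1)
  left_inv p := by simp
  right_inv p := by simp

/-- The overshear `(u, y) ↦ (u, e ^ (c u) y)`. -/
noncomputable def overshear (c : ℂ) : Equiv.Perm (ℂ × ℂ) where
  toFun p := (p.1, exp (c * p.1) * p.2)
  invFun p := (p.1, exp (-(c * p.1)) * p.2)
  left_inv p := by simp [← mul_assoc, ← Complex.exp_add]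
  right_inv p := by simp [← mul_assoc, ← Complex.exp_add]

/-- The time one map of the complete vector field `(u, t) ↦ (-v u, -v)`, where the function
`v = u e ^ (-t)` is constant along the flow. -/
noncomputable def parabolicFlow : Equiv.Perm (ℂ × ℂ) where
  toFun p := (exp (-(p.1 * exp (-p.2))) * p.1, p.2 - p.1 * exp (-p.2))
  invFun p := (exp (p.1 * exp (-p.2)) * p.1, p.2 + p.1 * exp (-p.2))
  left_inv p := by
    have hv : exp (-(p.1 * exp (-p.2))) * p.1
        * exp (-(p.2 - p.1 * exp (-p.2))) = p.1 * exp (-p.2) := by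
      rw [mul_right_comm, ← Complex.exp_add]
      ring_nf
    simp only [hv, ← mul_assoc, ← Complex.exp_add]
    simp
  right_inv p := by
    have hv : exp (p.1 * exp (-p.2)) * p.1
        * exp (-(p.2 + p.1 * exp (-p.2))) = p.1 * exp (-p.2) := by
      rw [mul_right_comm, ← Complex.exp_add]
      ring_nf
    simp only [hv, ← mul_assoc, ← Complex.exp_add]
    simp

/-- The exponent by which `planarAut` contracts the first coordinate. -/
noncomputable def exponent (p : ℂ × ℂ) : ℂ := p.1 * exp (-(p.2 + p.1 / 2))

/-- The planar automorphism whose basin is biholomorphic to `ℂ²`. At the origin it satisfies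
`1 / u ↦ 1 / u + 1 - y + ⋯` and `y ↦ y - 3 / 2 u y + ⋯`: the shear by `1 / 2` removes a term in `u`
from the former, which would lead to a logarithm in the Fatou coordinate, and the overshear changes
the coefficient of `u y` in the latter from `1` to a number between `-2` and `-1`. -/
noncomputable def planarAut : Equiv.Perm (ℂ × ℂ) :=
  (shear (1 / 2)).trans <| parabolicFlow.trans <| (shear (1 / 2)).trans <| overshear (-5 / 2)

theorem planarAut_fst (p : ℂ × ℂ) : (planarAut p).1 = exp (-exponent p) * p.1 := by
  simp only [planarAut, shear, parabolicFlow, overshear, exponent, Equiv.trans_apply,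
    Equiv.coe_fn_mk]
  ring_nf

theorem planarAut_snd (p : ℂ × ℂ) :
    (planarAut p).2 = exp (-5 / 2 * (planarAut p).1)
      * (p.2 + (p.1 + (planarAut p).1) / 2 - exponent p) := by
  simp only [planarAut, shear, parabolicFlow, overshear, exponent, Equiv.trans_apply,
    Equiv.coe_fn_mk]
  ring_nf

theorem differentiable_exponent : Differentiable ℂ exponent := by
  unfold exponent
  fun_prop

theorem differentiable_planarAut : Differentiable ℂ planarAut := by
  simp only [planarAut, shear, parabolicFlow, overshear, Equiv.coe_trans, Equiv.coe_fn_mk]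
  fun_prop

theorem differentiable_planarAut_symm : Differentiable ℂ planarAut.symm := by
  simp only [planarAut, shear, parabolicFlow, overshear, Equiv.symm_trans, Equiv.coe_trans,
    Equiv.coe_fn_symm_mk]
  fun_prop

theorem exponent_eq_zero {p : ℂ × ℂ} (h : p.1 = 0) : exponent p = 0 := by
  simp [exponent, h]

theorem planarAut_eq_self {p : ℂ × ℂ} (h : p.1 = 0) : planarAut p = p := by
  have h1 : (planarAut p).1 = 0 := by rw [planarAut_fst, h, mul_zero]
  ext
  · rw [h1, h]
  · simp [planarAut_snd, h1, h, exponent_eq_zero h]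

/-! ### Expansions at the origin -/

theorem exp_sub_one_isBigO : (fun z => exp z - 1) =O[𝓝 0] fun z => z := by
  simpa using Complex.exp_sub_sum_range_isBigO_pow 1

theorem exp_sub_linear_isBigO : (fun z => exp z - (1 + z)) =O[𝓝 0] fun z => z ^ 2 := by
  simpa [Finset.sum_range_succ] using Complex.exp_sub_sum_range_isBigO_pow 2

theorem exp_sub_quadratic_isBigO :
    (fun z => exp z - (1 + z + z ^ 2 / 2)) =O[𝓝 0] fun z => z ^ 3 := by
  simpa [Finset.sum_range_succ] using Complex.exp_sub_sum_range_isBigO_pow 3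

theorem fst_isBigO_norm : (Prod.fst : ℂ × ℂ → ℂ) =O[𝓝 0] fun p => ‖p‖ :=
  .of_norm_le norm_fst_le

theorem snd_isBigO_norm : (Prod.snd : ℂ × ℂ → ℂ) =O[𝓝 0] fun p => ‖p‖ :=
  .of_norm_le norm_snd_le

theorem fst_isBigO_norm_fst : (Prod.fst : ℂ × ℂ → ℂ) =O[𝓝 0] fun p => ‖p.1‖ :=
  .of_norm_le fun _ => le_rfl

theorem norm_fst_isBigO_norm : (fun p : ℂ × ℂ => ‖p.1‖) =O[𝓝 0] fun p => ‖p‖ :=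
  fst_isBigO_norm.norm_left

theorem tendsto_exponent : Tendsto exponent (𝓝 0) (𝓝 0) := by
  simpa [exponent_eq_zero] using differentiable_exponent.continuous.tendsto 0

theorem neg_snd_add_isBigO_norm :
    (fun p : ℂ × ℂ => -(p.2 + p.1 / 2)) =O[𝓝 0] fun p => ‖p‖ := by
  simpa [div_eq_inv_mul] using
    (snd_isBigO_norm.add (fst_isBigO_norm.const_mul_left (2⁻¹ : ℂ))).neg_left

theorem tendsto_neg_snd_add : Tendsto (fun p : ℂ × ℂ => -(p.2 + p.1 / 2)) (𝓝 0) (𝓝 0) :=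
  neg_snd_add_isBigO_norm.trans_tendsto tendsto_norm_zero

theorem exponent_sub_isBigO :
    (fun p => exponent p - p.1 * (1 - (p.2 + p.1 / 2))) =O[𝓝 0] fun p => ‖p.1‖ * ‖p‖ ^ 2 := by
  refine (fst_isBigO_norm_fst.mul ((exp_sub_linear_isBigO.comp_tendsto tendsto_neg_snd_add).trans
    (neg_snd_add_isBigO_norm.pow 2))).congr_left fun p => ?_
  simp only [Function.comp_apply, exponent]
  ring

theorem exponent_sub_fst_isBigO :
    (fun p => exponent p - p.1) =O[𝓝 0] fun p => ‖p.1‖ * ‖p‖ := by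
  refine (fst_isBigO_norm_fst.mul ((exp_sub_one_isBigO.comp_tendsto tendsto_neg_snd_add).trans
    neg_snd_add_isBigO_norm)).congr_left fun p => ?_
  simp only [Function.comp_apply, exponent]
  ring

theorem fst_mul_norm_isBigO_fst :
    (fun p : ℂ × ℂ => ‖p.1‖ * ‖p‖) =O[𝓝 0] fun p => ‖p.1‖ := by
  simpa using (isBigO_refl (fun p : ℂ × ℂ => ‖p.1‖) (𝓝 0)).mul (tendsto_norm_zero.isBigO_one ℝ)

theorem exponent_isBigO_fst : exponent =O[𝓝 0] fun p => ‖p.1‖ :=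
  ((exponent_sub_fst_isBigO.trans fst_mul_norm_isBigO_fst).add fst_isBigO_norm_fst).congr_left
    fun _ => sub_add_cancel _ _

theorem exponent_isBigO_norm : exponent =O[𝓝 0] fun p => ‖p‖ :=
  exponent_isBigO_fst.trans norm_fst_isBigO_norm

theorem exp_exponent_isBigO :
    (fun p => exp (exponent p) - 1 - p.1 * (1 - p.2)) =O[𝓝 0] fun p => ‖p.1‖ * ‖p‖ ^ 2 := by
  have hcube : (fun p => exp (exponent p) - (1 + exponent p + exponent p ^ 2 / 2))
      =O[𝓝 0] fun p => ‖p.1‖ * ‖p‖ ^ 2 :=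
    (exp_sub_quadratic_isBigO.comp_tendsto tendsto_exponent).trans
      ((exponent_isBigO_fst.mul (exponent_isBigO_norm.pow 2)).congr_left
        fun _ => (pow_succ' _ 2).symm)
  have hsq : (fun p => exponent p ^ 2 - p.1 ^ 2) =O[𝓝 0] fun p => ‖p.1‖ * ‖p‖ ^ 2 := by
    refine (exponent_sub_fst_isBigO.mul (exponent_isBigO_norm.add fst_isBigO_norm)).congr
      (fun p => ?_) fun p => ?_ <;> ring
  refine ((hcube.add exponent_sub_isBigO).add (hsq.const_mul_left (1 / 2))).congr_left fun p => ?_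
  ring

theorem planarAut_fst_sub_add_isBigO :
    (fun p => (planarAut p).1 - p.1 + p.1 * exponent p) =O[𝓝 0] fun p => ‖p.1‖ * ‖p‖ ^ 2 := by
  have hv : Tendsto (fun p => -exponent p) (𝓝 0) (𝓝 0) := by simpa using tendsto_exponent.neg
  refine (fst_isBigO_norm_fst.mul ((exp_sub_linear_isBigO.comp_tendsto hv).trans
    (exponent_isBigO_norm.neg_left.pow 2))).congr_left fun p => ?_
  simp only [Function.comp_apply, planarAut_fst]
  ring

theorem planarAut_fst_sub_isBigO :
    (fun p => (planarAut p).1 - p.1) =O[𝓝 0] fun p => ‖p.1‖ * ‖p‖ := by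
  have hv : Tendsto (fun p => -exponent p) (𝓝 0) (𝓝 0) := by simpa using tendsto_exponent.neg
  refine (fst_isBigO_norm_fst.mul ((exp_sub_one_isBigO.comp_tendsto hv).trans
    exponent_isBigO_norm.neg_left)).congr_left fun p => ?_
  simp only [Function.comp_apply, planarAut_fst]
  ring

theorem planarAut_fst_isBigO_fst : (fun p => (planarAut p).1) =O[𝓝 0] fun p => ‖p.1‖ :=
  ((planarAut_fst_sub_isBigO.trans fst_mul_norm_isBigO_fst).add fst_isBigO_norm_fst).congr_left
    fun _ => sub_add_cancel _ _

theorem planarAut_affine_isBigO :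
    (fun p => p.2 + (p.1 + (planarAut p).1) / 2 - exponent p - p.2 * (1 + p.1)) =O[𝓝 0]
      fun p => ‖p.1‖ * ‖p‖ ^ 2 := by
  have hprod : (fun p => (exponent p - p.1) * p.1) =O[𝓝 0] fun p => ‖p.1‖ * ‖p‖ ^ 2 :=
    (exponent_sub_fst_isBigO.mul fst_isBigO_norm).congr_right fun p => by ring
  refine (((planarAut_fst_sub_add_isBigO.const_mul_left (1 / 2)).sub exponent_sub_isBigO).sub
    (hprod.const_mul_left (1 / 2))).congr_left fun p => ?_
  ring

theorem planarAut_factor_isBigO :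
    (fun p => exp (3 / 2 * exponent p - 5 / 2 * (planarAut p).1) - (1 - p.1)) =O[𝓝 0]
      fun p => ‖p.1‖ * ‖p‖ := by
  have hx : (fun p => 3 / 2 * exponent p - 5 / 2 * (planarAut p).1) =O[𝓝 0] fun p => ‖p.1‖ :=
    (exponent_isBigO_fst.const_mul_left _).sub (planarAut_fst_isBigO_fst.const_mul_left _)
  have hx0 : Tendsto (fun p => 3 / 2 * exponent p - 5 / 2 * (planarAut p).1) (𝓝 0) (𝓝 0) :=
    (hx.trans norm_fst_isBigO_norm).trans_tendsto tendsto_norm_zero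
  have hsq : (fun p : ℂ × ℂ => ‖p.1‖ ^ 2) =O[𝓝 0] fun p => ‖p.1‖ * ‖p‖ :=
    ((isBigO_refl _ _).mul norm_fst_isBigO_norm).congr_left fun _ => (sq _).symm
  have hexp := ((exp_sub_linear_isBigO.comp_tendsto hx0).trans (hx.pow 2)).trans hsq
  refine ((hexp.add (exponent_sub_fst_isBigO.const_mul_left (3 / 2))).sub
    (planarAut_fst_sub_isBigO.const_mul_left (5 / 2))).congr_left fun p => ?_
  simp only [Function.comp_apply]
  ring

theorem planarAut_snd_mul_exp_isBigO :
    (fun p => (planarAut p).2 * exp (3 / 2 * exponent p) - p.2) =O[𝓝 0]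
      fun p => ‖p.1‖ * ‖p‖ ^ 2 := by
  have hA : (fun p => p.2 + (p.1 + (planarAut p).1) / 2 - exponent p) =O[𝓝 0]
      fun p => ‖p‖ := by
    have hU : (fun p => (planarAut p).1) =O[𝓝 0] fun p => ‖p‖ :=
      planarAut_fst_isBigO_fst.trans norm_fst_isBigO_norm
    refine ((snd_isBigO_norm.add ((fst_isBigO_norm.add hU).const_mul_left (1 / 2))).sub
      exponent_isBigO_norm).congr_left fun p => ?_
    ring
  have h1u : (fun p : ℂ × ℂ => 1 - p.1) =O[𝓝 0] fun _ => (1 : ℝ) :=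
    (continuous_const.sub continuous_fst).continuousAt.norm.isBoundedUnder_le.isBigO_one ℝ
  have huy : (fun p : ℂ × ℂ => p.1 ^ 2 * p.2) =O[𝓝 0] fun p => ‖p.1‖ * ‖p‖ ^ 2 :=
    (fst_isBigO_norm_fst.mul (fst_isBigO_norm.mul snd_isBigO_norm)).congr
      (fun p => by ring) fun p => by ring
  refine (((planarAut_factor_isBigO.mul hA).congr_right fun p => ?_).add
    ((h1u.mul planarAut_affine_isBigO).congr_right fun _ => one_mul _)).sub huy
    |>.congr_left fun p => ?_
  · ring
  · rw [planarAut_snd, show 3 / 2 * exponent p - 5 / 2 * (planarAut p).1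
      = -5 / 2 * (planarAut p).1 + 3 / 2 * exponent p by ring, Complex.exp_add]
    ring

theorem planarAut_sub_isBigO : (fun p => planarAut p - p) =O[𝓝 0] fun p => ‖p‖ ^ 2 := by
  have hν : (fun p : ℂ × ℂ => ‖p.1‖ * ‖p‖) =O[𝓝 0] fun p => ‖p‖ ^ 2 :=
    (norm_fst_isBigO_norm.mul (isBigO_refl _ _)).congr_right fun _ => (sq _).symm
  have hE : Tendsto (fun p => -(3 / 2 * exponent p)) (𝓝 0) (𝓝 0) := by
    simpa using (tendsto_exponent.const_mul (3 / 2)).neg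
  have hE1 : (fun p => exp (-(3 / 2 * exponent p)) - 1) =O[𝓝 0] fun p => ‖p‖ :=
    (exp_sub_one_isBigO.comp_tendsto hE).trans
      (exponent_isBigO_norm.const_mul_left _).neg_left
  have hexp : (fun p => exp (-(3 / 2 * exponent p))) =O[𝓝 0] fun _ => (1 : ℝ) :=
    (hE.cexp).isBigO_one ℝ
  have hS : (fun p => (planarAut p).2 * exp (3 / 2 * exponent p) - p.2) =O[𝓝 0]
      fun p => ‖p‖ ^ 2 := by
    refine planarAut_snd_mul_exp_isBigO.trans ?_
    simpa using (tendsto_norm_zero.comp (continuous_fst.tendsto (0 : ℂ × ℂ))).isBigO_one ℝ |>.mul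
      (isBigO_refl (fun p : ℂ × ℂ => ‖p‖ ^ 2) (𝓝 0))
  refine (planarAut_fst_sub_isBigO.trans hν).prod_left <|
    (((hS.mul hexp).congr_right fun _ => mul_one _).add
      ((snd_isBigO_norm.mul hE1).congr_right fun _ => (sq _).symm)).congr_left fun p => ?_
  have hcancel : exp (3 / 2 * exponent p) * exp (-(3 / 2 * exponent p)) = 1 := by
    rw [← Complex.exp_add, add_neg_cancel, Complex.exp_zero]
  change _ = (planarAut p).2 - p.2
  linear_combination (planarAut p).2 * hcancel

theorem hasFDerivAt_planarAut : HasFDerivAt planarAut (ContinuousLinearMap.id ℂ (ℂ × ℂ)) 0 := by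
  have h : HasFDerivAt (fun p => planarAut p - p) (0 : ℂ × ℂ →L[ℂ] ℂ × ℂ) 0 :=
    IsBigO.hasFDerivAt (by simpa using planarAut_sub_isBigO) one_lt_two
  simpa using h.fun_add (hasFDerivAt_id 0)

/-! ### Petals -/

/-- The function whose superlevel sets are the sectors `R < Re ζ - |Im ζ|` about the positive real
axis. -/
def sec (ζ : ℂ) : ℝ := ζ.re - |ζ.im|

theorem continuous_sec : Continuous sec := by
  unfold sec
  fun_prop

theorem sec_le_re (ζ : ℂ) : sec ζ ≤ ζ.re := sub_le_self _ (abs_nonneg _)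

theorem sec_le_norm (ζ : ℂ) : sec ζ ≤ ‖ζ‖ := (sec_le_re ζ).trans (Complex.re_le_norm ζ)

theorem add_le_sec_add (a b : ℂ) : sec a + sec b ≤ sec (a + b) := by
  simp only [sec, Complex.add_re, Complex.add_im]
  linarith [abs_add_le a.im b.im]

theorem sec_add_real (a : ℂ) (t : ℝ) : sec (a + t) = sec a + t := by
  simp [sec]
  ring

theorem half_norm_le_re_of_sec_inv_nonneg {z : ℂ} (h : 0 ≤ sec z⁻¹) : ‖z‖ / 2 ≤ z.re := by
  have him : |z.im| ≤ z.re := by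
    rcases eq_or_ne z 0 with rfl | hz
    · simp
    rw [sec, Complex.inv_re, Complex.inv_im, abs_div, abs_neg, abs_of_pos (Complex.normSq_pos.2 hz),
      sub_nonneg] at h
    exact (div_le_div_iff_of_pos_right (Complex.normSq_pos.2 hz)).1 h
  have hre : 0 ≤ z.re := (abs_nonneg _).trans him
  linarith [Complex.norm_le_abs_re_add_abs_im z, abs_of_nonneg hre]

/-- The region of points `(u, y)` such that `1 / u` lies in a sector far to the right and `y / u`
is bounded. -/
def petal (K R : ℝ) : Set (ℂ × ℂ) := {p | R < sec p.1⁻¹ ∧ ‖p.2‖ ≤ K * ‖p.1‖}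

theorem petal_subset_petal {K R R' : ℝ} (h : R ≤ R') : petal K R' ⊆ petal K R :=
  fun _ hp => ⟨h.trans_lt hp.1, hp.2⟩

theorem norm_fst_lt_of_mem_petal {K R : ℝ} (hR : 0 < R) {p : ℂ × ℂ} (hp : p ∈ petal K R) :
    ‖p.1‖ < R⁻¹ := by
  have h := hp.1.trans_le (sec_le_norm _)
  rw [norm_inv] at h
  exact lt_inv_of_lt_inv₀ hR h

theorem fst_ne_zero_of_mem_petal {K R : ℝ} (hR : 0 ≤ R) {p : ℂ × ℂ} (hp : p ∈ petal K R) :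
    p.1 ≠ 0 := by
  rintro h
  have := hp.1
  simp [h, sec] at this
  linarith

theorem norm_le_of_mem_petal {K R : ℝ} (hK : 1 ≤ K) {p : ℂ × ℂ} (hp : p ∈ petal K R) :
    ‖p‖ ≤ K * ‖p.1‖ :=
  max_le (le_mul_of_one_le_left (norm_nonneg _) hK) hp.2

theorem tendsto_petal_smallSets {K : ℝ} (hK : 1 ≤ K) :
    Tendsto (petal K) atTop (𝓝[{p : ℂ × ℂ | p.1 ≠ 0}] 0).smallSets := by
  refine tendsto_smallSets_iff.2 fun t ht => ?_
  obtain ⟨ε, hε, hεt⟩ := Metric.mem_nhdsWithin_iff.1 ht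
  have hlim : Tendsto (fun R : ℝ => K * R⁻¹) atTop (𝓝 0) := by
    simpa using tendsto_inv_atTop_zero.const_mul K
  filter_upwards [hlim.eventually_lt_const hε, eventually_gt_atTop 0] with R hRε hR p hp
  refine hεt ⟨?_, fst_ne_zero_of_mem_petal hR.le hp⟩
  calc dist p 0 = ‖p‖ := dist_zero_right p
    _ ≤ K * ‖p.1‖ := norm_le_of_mem_petal hK hp
    _ ≤ K * R⁻¹ := by gcongr; exact (norm_fst_lt_of_mem_petal hR hp).le
    _ < ε := hRε

theorem eventually_forall_mem_petal {P : ℂ × ℂ → Prop} {K : ℝ} (hK : 1 ≤ K)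
    (hP : ∀ᶠ p in 𝓝[{p : ℂ × ℂ | p.1 ≠ 0}] 0, P p) : ∀ᶠ R in atTop, ∀ p ∈ petal K R, P p :=
  (tendsto_petal_smallSets hK).eventually (eventually_smallSets_forall.2 hP)

theorem inv_planarAut_fst (p : ℂ × ℂ) : (planarAut p).1⁻¹ = p.1⁻¹ * exp (exponent p) := by
  rw [planarAut_fst, mul_inv, ← Complex.exp_neg, neg_neg, mul_comm]

theorem inv_planarAut_fst_isBigO :
    (fun p => (planarAut p).1⁻¹ - p.1⁻¹ - (1 - p.2)) =O[𝓝[{p : ℂ × ℂ | p.1 ≠ 0}] 0]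
      fun p => ‖p‖ ^ 2 := by
  have hinv : (fun p : ℂ × ℂ => p.1⁻¹) =O[𝓝[{p : ℂ × ℂ | p.1 ≠ 0}] 0] fun p => ‖p.1‖⁻¹ :=
    .of_norm_le fun p => (norm_inv p.1).le
  refine (hinv.mul (exp_exponent_isBigO.mono nhdsWithin_le_nhds)).congr' ?_ ?_ <;>
    filter_upwards [self_mem_nhdsWithin] with p (hp : p.1 ≠ 0)
  · rw [inv_planarAut_fst]
    field_simp
  · field_simp

theorem eventually_sec_add_le :
    ∀ᶠ p in 𝓝[{p : ℂ × ℂ | p.1 ≠ 0}] 0, sec p.1⁻¹ + 1 / 2 ≤ sec (planarAut p).1⁻¹ := by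
  have hle : 𝓝[{p : ℂ × ℂ | p.1 ≠ 0}] 0 ≤ 𝓝 (0 : ℂ × ℂ) := nhdsWithin_le_nhds
  have hsq : Tendsto (fun p : ℂ × ℂ => ‖p‖ ^ 2) (𝓝 0) (𝓝 0) := by
    simpa using (tendsto_norm_zero (E := ℂ × ℂ)).pow 2
  have hsnd : Tendsto (fun p : ℂ × ℂ => 1 - p.2) (𝓝 0) (𝓝 1) :=
    (by fun_prop : Continuous fun p : ℂ × ℂ => 1 - p.2).tendsto' 0 1 (by simp)
  have hdiff : Tendsto (fun p => (planarAut p).1⁻¹ - p.1⁻¹) (𝓝[{p : ℂ × ℂ | p.1 ≠ 0}] 0)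
      (𝓝 1) := by
    simpa using (inv_planarAut_fst_isBigO.trans_tendsto (hsq.mono_left hle)).add
      (hsnd.mono_left hle)
  have hlim := (continuous_sec.tendsto 1).comp hdiff
  filter_upwards [hlim.eventually_const_le (by norm_num [sec] : 1 / 2 < sec 1)] with p hp
  calc sec p.1⁻¹ + 1 / 2 ≤ sec p.1⁻¹ + sec ((planarAut p).1⁻¹ - p.1⁻¹) := by gcongr; exact hp
    _ ≤ sec (planarAut p).1⁻¹ := by
      simpa using add_le_sec_add p.1⁻¹ ((planarAut p).1⁻¹ - p.1⁻¹)

theorem eventually_quarter_norm_le_re_exponent :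
    ∀ᶠ p in 𝓝 (0 : ℂ × ℂ), 0 ≤ sec p.1⁻¹ → ‖p.1‖ / 4 ≤ (exponent p).re := by
  obtain ⟨C, hC⟩ := exponent_sub_fst_isBigO.bound
  have hsmall : Tendsto (fun p : ℂ × ℂ => C * ‖p‖) (𝓝 0) (𝓝 0) := by
    simpa using tendsto_norm_zero.const_mul C
  filter_upwards [hC, hsmall.eventually_le_const (by norm_num : (0 : ℝ) < 1 / 4)] with p hp hCp hsec
  have herr : ‖exponent p - p.1‖ ≤ ‖p.1‖ / 4 := by
    rw [norm_mul, norm_norm, norm_norm] at hp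
    nlinarith [norm_nonneg p.1]
  have hre := (abs_le.1 ((Complex.abs_re_le_norm _).trans herr)).1
  rw [Complex.sub_re] at hre
  linarith [half_norm_le_re_of_sec_inv_nonneg hsec]

theorem eventually_norm_snd_le :
    ∀ᶠ p in 𝓝 (0 : ℂ × ℂ), ∀ K ≥ 1, 0 ≤ sec p.1⁻¹ → ‖p.2‖ ≤ K * ‖p.1‖ →
      ‖(planarAut p).2‖ ≤ K * ‖(planarAut p).1‖ := by
  obtain ⟨C, hC⟩ := planarAut_snd_mul_exp_isBigO.bound
  have hsmall : Tendsto (fun p : ℂ × ℂ => C * ‖p‖) (𝓝 0) (𝓝 0) := by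
    simpa using tendsto_norm_zero.const_mul C
  filter_upwards [hC, hsmall.eventually_le_const (by norm_num : (0 : ℝ) < 1 / 8),
    eventually_quarter_norm_le_re_exponent] with p hp hCp hexp K hK hsec hpK
  have hpnorm : ‖p‖ ≤ K * ‖p.1‖ := max_le (le_mul_of_one_le_left (norm_nonneg _) hK) hpK
  have hkey : ‖(planarAut p).2 * exp (3 / 2 * exponent p)‖ ≤
      K * ‖p.1‖ * ‖exp (exponent p / 2)‖ :=
    calc
      _ ≤ ‖p.2‖ + C * ‖p‖ * ‖p‖ * ‖p.1‖ := by
        refine (norm_le_norm_add_norm_sub' _ p.2).trans (add_le_add_right (hp.trans_eq ?_) _)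
        rw [Real.norm_of_nonneg (by positivity)]
        ring
      _ ≤ K * ‖p.1‖ + 1 / 8 * (K * ‖p.1‖) * ‖p.1‖ := by gcongr
      _ = K * ‖p.1‖ * (‖p.1‖ / 8 + 1) := by ring
      _ ≤ K * ‖p.1‖ * ‖exp (exponent p / 2)‖ := by
        gcongr
        rw [Complex.norm_exp, Complex.div_ofNat_re]
        refine (Real.add_one_le_exp _).trans (Real.exp_le_exp.2 ?_)
        linarith [hexp hsec]
  calc
    _ = ‖(planarAut p).2 * exp (3 / 2 * exponent p)‖ * ‖exp (-(3 / 2 * exponent p))‖ := by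
      rw [← norm_mul, mul_assoc, ← Complex.exp_add, add_neg_cancel, Complex.exp_zero, mul_one]
    _ ≤ K * ‖p.1‖ * ‖exp (exponent p / 2)‖ * ‖exp (-(3 / 2 * exponent p))‖ := by gcongr
    _ = K * ‖(planarAut p).1‖ := by
      rw [planarAut_fst, norm_mul, mul_assoc _ ‖exp _‖, ← norm_mul, ← Complex.exp_add]
      ring_nf

theorem eventually_forall_mem_petal_planarAut_mem {K : ℝ} (hK : 1 ≤ K) :
    ∀ᶠ R in atTop, ∀ R' ≥ R, MapsTo planarAut (petal K R') (petal K (R' + 1 / 2)) := by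
  filter_upwards [eventually_forall_mem_petal hK eventually_sec_add_le,
    eventually_forall_mem_petal hK (nhdsWithin_le_nhds eventually_norm_snd_le),
    eventually_ge_atTop 0] with R hsec hsnd hR R' hR' p hp
  have hpR := petal_subset_petal hR' hp
  exact ⟨(add_lt_add_left hp.1 _).trans_le (hsec p hpR),
    hsnd p hpR K hK (hR.trans hpR.1.le) hp.2⟩

theorem eventually_iterate_mem_petal {K : ℝ} (hK : 1 ≤ K) :
    ∀ᶠ R in atTop, ∀ p ∈ petal K R, ∀ n : ℕ, planarAut^[n] p ∈ petal K (R + n / 2) := by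
  filter_upwards [eventually_forall_mem_petal_planarAut_mem hK] with R hR p hp n
  induction n with
  | zero => simpa using hp
  | succ n ih =>
    rw [Function.iterate_succ_apply', Nat.cast_succ, add_div, ← add_assoc]
    exact hR _ (le_add_of_nonneg_right (by positivity)) ih

/-! ### Fatou coordinates -/

/-- The branch of `ζ ^ (3 / 2)` on the right half-plane, extended without zeros to the plane. -/
noncomputable def threeHalvesPow (ζ : ℂ) : ℂ := exp (3 / 2 * log ζ)

theorem threeHalvesPow_ne_zero (ζ : ℂ) : threeHalvesPow ζ ≠ 0 := Complex.exp_ne_zero _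

theorem norm_threeHalvesPow {ζ : ℂ} (h : ζ ≠ 0) : ‖threeHalvesPow ζ‖ = ‖ζ‖ * √‖ζ‖ := by
  have hpos : 0 < ‖ζ‖ := norm_pos_iff.2 h
  have hre : (3 / 2 * log ζ).re = Real.log ‖ζ‖ + Real.log ‖ζ‖ * (1 / 2) := by
    rw [show (3 / 2 : ℂ) = ((3 / 2 : ℝ) : ℂ) by norm_num, Complex.re_ofReal_mul, Complex.log_re]
    ring
  rw [threeHalvesPow, Complex.norm_exp, hre, Real.exp_add, Real.exp_log hpos, Real.sqrt_eq_rpow,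
    Real.rpow_def_of_pos hpos]

theorem threeHalvesPow_mul_exp {ζ v : ℂ} (h : 0 < ζ.re) (hv : ‖v‖ ≤ 1) :
    threeHalvesPow (ζ * exp v) = threeHalvesPow ζ * exp (3 / 2 * v) := by
  have h0 : ζ ≠ 0 := by
    rintro rfl
    simp at h
  have harg := abs_lt.1 (Complex.abs_arg_lt_pi_div_two_iff.2 (.inl h))
  have him := abs_le.1 ((Complex.abs_im_le_norm v).trans hv)
  have hpi := Real.pi_gt_three
  have hlog : log (ζ * exp v) = log ζ + v := by
    nth_rewrite 1 [← Complex.exp_log h0]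
    rw [← Complex.exp_add]
    apply Complex.log_exp <;> rw [Complex.add_im, Complex.log_im] <;> linarith
  rw [threeHalvesPow, hlog, threeHalvesPow, ← Complex.exp_add, mul_add]

theorem differentiableAt_threeHalvesPow {ζ : ℂ} (h : 0 < ζ.re) :
    DifferentiableAt ℂ threeHalvesPow ζ := by
  have : DifferentiableAt ℂ log ζ := Complex.differentiableAt_log (.inl h)
  unfold threeHalvesPow
  fun_prop

/-- The coordinates `(1 / u, y / u ^ (3 / 2))` on the petals, in which `planarAut` is asymptotic to
the translation by `(1, 0)`. -/
noncomputable def petalCoord : Equiv.Perm (ℂ × ℂ) where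
  toFun p := (p.1⁻¹, p.2 * threeHalvesPow p.1⁻¹)
  invFun x := (x.1⁻¹, x.2 / threeHalvesPow x.1)
  left_inv p := by simp [threeHalvesPow_ne_zero]
  right_inv x := by simp [threeHalvesPow_ne_zero]

theorem petalCoord_fst (p : ℂ × ℂ) : (petalCoord p).1 = p.1⁻¹ := rfl

theorem petalCoord_snd (p : ℂ × ℂ) : (petalCoord p).2 = p.2 * threeHalvesPow p.1⁻¹ := rfl

theorem petalCoord_symm_apply (x : ℂ × ℂ) :
    petalCoord.symm x = (x.1⁻¹, x.2 / threeHalvesPow x.1) := rfl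

theorem norm_threeHalvesPow_inv {u : ℂ} (h : u ≠ 0) :
    ‖threeHalvesPow u⁻¹‖ = (‖u‖ * √‖u‖)⁻¹ := by
  rw [norm_threeHalvesPow (inv_ne_zero h), norm_inv, Real.sqrt_inv, mul_inv]

theorem norm_snd_eq {p : ℂ × ℂ} (h : p.1 ≠ 0) :
    ‖p.2‖ = ‖(petalCoord p).2‖ * (‖p.1‖ * √‖p.1‖) := by
  have : 0 < ‖p.1‖ := norm_pos_iff.2 h
  rw [petalCoord_snd, norm_mul, norm_threeHalvesPow_inv h, inv_mul_cancel_right₀ (by positivity)]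

theorem petalCoord_planarAut_snd {p : ℂ × ℂ} (hre : 0 < p.1⁻¹.re) (hv : ‖exponent p‖ ≤ 1) :
    (petalCoord (planarAut p)).2 =
      (planarAut p).2 * exp (3 / 2 * exponent p) * threeHalvesPow p.1⁻¹ := by
  rw [petalCoord_snd, inv_planarAut_fst, threeHalvesPow_mul_exp hre hv, mul_comm (threeHalvesPow _),
    mul_assoc]

theorem exists_eventually_dist_petalCoord_snd_le {K : ℝ} (hK : 1 ≤ K) :
    ∃ C ≥ 0, ∀ᶠ R in atTop, ∀ p ∈ petal K R,
      dist (petalCoord p).2 (petalCoord (planarAut p)).2 ≤ C * (‖p.1‖ * √‖p.1‖) := by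
  obtain ⟨C, hC0, hC⟩ := planarAut_snd_mul_exp_isBigO.exists_nonneg
  have hexp : ∀ᶠ p in 𝓝 (0 : ℂ × ℂ), ‖exponent p‖ ≤ 1 :=
    tendsto_exponent.norm.eventually_le_const (by simp)
  refine ⟨C * K ^ 2, by positivity, ?_⟩
  filter_upwards [eventually_forall_mem_petal hK (nhdsWithin_le_nhds hC.bound),
    eventually_forall_mem_petal hK (nhdsWithin_le_nhds hexp), eventually_ge_atTop 0]
    with R hCR hexpR hR p hp
  have hu := fst_ne_zero_of_mem_petal hR hp
  have hu0 : 0 < ‖p.1‖ := norm_pos_iff.2 hu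
  rw [dist_comm, dist_eq_norm,
    petalCoord_planarAut_snd (hR.trans_lt (hp.1.trans_le (sec_le_re _))) (hexpR p hp),
    petalCoord_snd, ← sub_mul, norm_mul, norm_threeHalvesPow_inv hu]
  calc
    _ ≤ C * (‖p.1‖ * (K * ‖p.1‖) ^ 2) * (‖p.1‖ * √‖p.1‖)⁻¹ := by
      gcongr
      refine (hCR p hp).trans ?_
      rw [Real.norm_of_nonneg (by positivity)]
      gcongr
      exact norm_le_of_mem_petal hK hp
    _ = C * K ^ 2 * (‖p.1‖ * √‖p.1‖) := by
      rw [← div_eq_mul_inv, div_eq_iff (by positivity)]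
      linear_combination (-(C * K ^ 2 * ‖p.1‖ ^ 2)) * Real.mul_self_sqrt hu0.le

theorem exists_eventually_dist_petalCoord_fst_le {K : ℝ} (hK : 1 ≤ K) :
    ∃ C ≥ 0, ∀ᶠ R in atTop, ∀ p ∈ petal K R,
      dist (petalCoord p).1 ((petalCoord (planarAut p)).1 - 1) ≤
        C * (1 + ‖(petalCoord p).2‖) * (‖p.1‖ * √‖p.1‖) := by
  obtain ⟨C, hC0, hC⟩ := inv_planarAut_fst_isBigO.exists_nonneg
  refine ⟨C * K ^ 2 + 1, by positivity, ?_⟩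
  filter_upwards [eventually_forall_mem_petal hK hC.bound, eventually_ge_atTop 1] with R hCR hR p hp
  have hR0 : 0 < R := by linarith
  have hsqrt : ‖p.1‖ ≤ √‖p.1‖ := Real.le_sqrt_self_iff.2 <|
    (norm_fst_lt_of_mem_petal hR0 hp).le.trans (inv_le_one_of_one_le₀ hR)
  have herr : ‖(planarAut p).1⁻¹ - p.1⁻¹ - (1 - p.2)‖ ≤ C * K ^ 2 * (‖p.1‖ * √‖p.1‖) :=
    calc
      _ ≤ C * (K * ‖p.1‖) ^ 2 := by
        refine (hCR p hp).trans ?_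
        rw [norm_pow, norm_norm]
        gcongr
        exact norm_le_of_mem_petal hK hp
      _ = C * K ^ 2 * (‖p.1‖ * ‖p.1‖) := by ring
      _ ≤ C * K ^ 2 * (‖p.1‖ * √‖p.1‖) := by gcongr
  calc
    _ = ‖((planarAut p).1⁻¹ - p.1⁻¹ - (1 - p.2)) - p.2‖ := by
      rw [dist_comm, dist_eq_norm, petalCoord_fst, petalCoord_fst]
      ring_nf
    _ ≤ C * K ^ 2 * (‖p.1‖ * √‖p.1‖) + ‖(petalCoord p).2‖ * (‖p.1‖ * √‖p.1‖) := by
      rw [← norm_snd_eq (fst_ne_zero_of_mem_petal hR0.le hp)]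
      exact (norm_sub_le _ _).trans (add_le_add_left herr _)
    _ ≤ (C * K ^ 2 + 1) * (1 + ‖(petalCoord p).2‖) * (‖p.1‖ * √‖p.1‖) := by
      rw [← add_mul]
      gcongr
      nlinarith [norm_nonneg (petalCoord p).2, mul_nonneg hC0 (sq_nonneg K)]

theorem norm_fst_mul_sqrt_le_of_mem_petal {K R : ℝ} (hR : 1 ≤ R) {p : ℂ × ℂ} (hp : p ∈ petal K R) :
    ‖p.1‖ * √‖p.1‖ ≤ 12 * ((√R)⁻¹ - (√(R + 1 / 2))⁻¹) :=
  mul_sqrt_le_inv_sqrt_sub_inv_sqrt hR (norm_fst_lt_of_mem_petal (by linarith) hp).le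

theorem eventually_forall_iterate_norm_fst_mul_sqrt_le {K : ℝ} (hK : 1 ≤ K) :
    ∀ᶠ R in atTop, ∀ p ∈ petal K R, ∀ n : ℕ,
      ‖(planarAut^[n] p).1‖ * √‖(planarAut^[n] p).1‖ ≤
        12 * ((√(R + n / 2))⁻¹ - (√(R + (n + 1 : ℕ) / 2))⁻¹) := by
  filter_upwards [eventually_iterate_mem_petal hK, eventually_ge_atTop 1] with R hiter hR p hp n
  have hRn : 1 ≤ R + n / 2 := le_add_of_le_of_nonneg hR (by positivity)
  rw [Nat.cast_succ, add_div, ← add_assoc]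
  exact norm_fst_mul_sqrt_le_of_mem_petal hRn (hiter p hp n)

theorem exists_eventually_norm_iterate_snd_le {K : ℝ} (hK : 1 ≤ K) :
    ∃ C ≥ 0, ∀ᶠ R in atTop, ∀ p ∈ petal K R, ∀ n : ℕ,
      ‖(petalCoord (planarAut^[n] p)).2‖ ≤ ‖(petalCoord p).2‖ + C := by
  obtain ⟨C, hC0, hC⟩ := exists_eventually_dist_petalCoord_snd_le hK
  refine ⟨12 * C, by positivity, ?_⟩
  filter_upwards [hC, eventually_forall_iterate_norm_fst_mul_sqrt_le hK,
    eventually_iterate_mem_petal hK, eventually_ge_atTop 1] with R hstep hu hiter hR p hp n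
  have hdist (n : ℕ) : dist (petalCoord (planarAut^[n] p)).2 (petalCoord (planarAut^[n + 1] p)).2 ≤
      12 * C * (√(R + n / 2))⁻¹ - 12 * C * (√(R + (n + 1 : ℕ) / 2))⁻¹ := by
    rw [Function.iterate_succ_apply']
    have hpn := petal_subset_petal (le_add_of_nonneg_right (by positivity)) (hiter p hp n)
    exact (hstep _ hpn).trans ((mul_le_mul_of_nonneg_left (hu p hp n) hC0).trans_eq (by ring))
  have hsum := dist_le_sub_of_dist_le_sub_succ
    (b := fun n : ℕ => 12 * C * (√(R + n / 2))⁻¹) hdist n.zero_le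
  have hone : (√R)⁻¹ ≤ 1 := inv_le_one_of_one_le₀ (Real.one_le_sqrt.2 hR)
  calc ‖(petalCoord (planarAut^[n] p)).2‖
      ≤ ‖(petalCoord p).2‖ + dist (petalCoord p).2 (petalCoord (planarAut^[n] p)).2 := by
        rw [dist_comm, dist_eq_norm]
        exact norm_le_norm_add_norm_sub' _ _
    _ ≤ ‖(petalCoord p).2‖ + 12 * C * 1 := by
        gcongr
        refine hsum.trans ((sub_le_self _ (by positivity)).trans ?_)
        simp only [Nat.cast_zero, zero_div, add_zero]
        gcongr
    _ = ‖(petalCoord p).2‖ + 12 * C := by rw [mul_one]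

/-- The approximations of the Fatou coordinate: apply `planarAut` `n` times, then translate back. -/
noncomputable def approxFatouCoord (n : ℕ) (p : ℂ × ℂ) : ℂ × ℂ :=
  petalCoord (planarAut^[n] p) - ((n : ℂ), 0)

theorem dist_approxFatouCoord_succ (n : ℕ) (p : ℂ × ℂ) :
    dist (approxFatouCoord n p) (approxFatouCoord (n + 1) p) =
      max (dist (petalCoord (planarAut^[n] p)).1 ((petalCoord (planarAut (planarAut^[n] p))).1 - 1))
        (dist (petalCoord (planarAut^[n] p)).2 (petalCoord (planarAut (planarAut^[n] p))).2) := by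
  simp only [approxFatouCoord, Function.iterate_succ_apply', Prod.dist_eq, Prod.fst_sub,
    Prod.snd_sub, sub_zero, Nat.cast_succ]
  rw [add_comm (n : ℂ) 1, ← sub_sub, dist_sub_right]

theorem exists_eventually_dist_approxFatouCoord_succ_le {K : ℝ} (hK : 1 ≤ K) :
    ∃ C ≥ 0, ∀ᶠ R in atTop, ∀ p ∈ petal K R, ∀ n : ℕ,
      dist (approxFatouCoord n p) (approxFatouCoord (n + 1) p) ≤
        C * (1 + ‖(petalCoord p).2‖) * ((√(R + n / 2))⁻¹ - (√(R + (n + 1 : ℕ) / 2))⁻¹) := by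
  obtain ⟨C₁, hC₁0, hC₁⟩ := exists_eventually_dist_petalCoord_fst_le hK
  obtain ⟨C₂, hC₂0, hC₂⟩ := exists_eventually_dist_petalCoord_snd_le hK
  obtain ⟨A, hA0, hA⟩ := exists_eventually_norm_iterate_snd_le hK
  refine ⟨(C₁ + C₂) * (1 + A) * 12, by positivity, ?_⟩
  filter_upwards [hC₁, hC₂, hA, eventually_forall_iterate_norm_fst_mul_sqrt_le hK,
    eventually_iterate_mem_petal hK] with R hfst hsnd hbdd hu hiter p hp n
  have hpn := petal_subset_petal (le_add_of_nonneg_right (by positivity)) (hiter p hp n)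
  rw [dist_approxFatouCoord_succ]
  set q := planarAut^[n] p
  set t := ‖q.1‖ * √‖q.1‖
  have hcoef : 1 + ‖(petalCoord q).2‖ ≤ (1 + A) * (1 + ‖(petalCoord p).2‖) := by
    nlinarith [hbdd p hp n, norm_nonneg (petalCoord p).2]
  calc
    _ ≤ (C₁ + C₂) * (1 + ‖(petalCoord q).2‖) * t := by
      refine max_le ((hfst q hpn).trans ?_) ((hsnd q hpn).trans ?_) <;> gcongr
      · exact le_add_of_nonneg_right hC₂0
      · exact (le_add_of_nonneg_left hC₁0).trans
          (le_mul_of_one_le_right (by positivity) (le_add_of_nonneg_right (norm_nonneg _)))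
    _ ≤ (C₁ + C₂) * ((1 + A) * (1 + ‖(petalCoord p).2‖)) *
          (12 * ((√(R + n / 2))⁻¹ - (√(R + (n + 1 : ℕ) / 2))⁻¹)) := by
      gcongr
      exact hu p hp n
    _ = _ := by ring

theorem exists_eventually_dist_approxFatouCoord_le {K : ℝ} (hK : 1 ≤ K) :
    ∃ C ≥ 0, ∀ᶠ R in atTop, ∀ p ∈ petal K R, ∀ n m : ℕ, n ≤ m →
      dist (approxFatouCoord n p) (approxFatouCoord m p) ≤
        C * (1 + ‖(petalCoord p).2‖) * (√(R + n / 2))⁻¹ := by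
  obtain ⟨C, hC0, hC⟩ := exists_eventually_dist_approxFatouCoord_succ_le hK
  refine ⟨C, hC0, hC.mono fun R hR p hp n m hnm => ?_⟩
  have hsum := dist_le_sub_of_dist_le_sub_succ
    (b := fun n : ℕ => C * (1 + ‖(petalCoord p).2‖) * (√(R + n / 2))⁻¹)
    (fun n => (hR p hp n).trans_eq (mul_sub _ _ _)) hnm
  exact hsum.trans (sub_le_self _ (by positivity))

/-- The Fatou coordinate: the limit of the approximations, which exists on the basin of attraction
and conjugates `planarAut` to the translation by `(1, 0)`. -/
noncomputable def fatouCoord (p : ℂ × ℂ) : ℂ × ℂ := limUnder atTop fun n => approxFatouCoord n p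

theorem tendsto_inv_sqrt_add_half (R : ℝ) :
    Tendsto (fun n : ℕ => (√(R + n / 2))⁻¹) atTop (𝓝 0) :=
  (Real.tendsto_sqrt_atTop.comp <| tendsto_atTop_add_const_left _ _ <|
    tendsto_natCast_atTop_atTop.atTop_div_const two_pos).inv_tendsto_atTop

theorem exists_eventually_dist_fatouCoord_le {K : ℝ} (hK : 1 ≤ K) :
    ∃ C ≥ 0, ∀ᶠ R in atTop, ∀ p ∈ petal K R,
      Tendsto (fun n => approxFatouCoord n p) atTop (𝓝 (fatouCoord p)) ∧
      ∀ n : ℕ, dist (approxFatouCoord n p) (fatouCoord p) ≤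
        C * (1 + ‖(petalCoord p).2‖) * (√(R + n / 2))⁻¹ := by
  obtain ⟨C, hC0, hC⟩ := exists_eventually_dist_approxFatouCoord_le hK
  refine ⟨C, hC0, hC.mono fun R hR p hp => ?_⟩
  have hcauchy : CauchySeq fun n => approxFatouCoord n p :=
    cauchySeq_of_le_tendsto_0' _ (hR p hp) (by
      simpa using (tendsto_inv_sqrt_add_half R).const_mul (C * (1 + ‖(petalCoord p).2‖)))
  have hlim := hcauchy.tendsto_limUnder
  exact ⟨hlim, fun n => le_of_tendsto (tendsto_const_nhds.dist hlim)
    ((eventually_ge_atTop n).mono fun m hnm => hR p hp n m hnm)⟩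

/-! ### The basin of the planar automorphism -/

theorem planarAut_zero : planarAut 0 = 0 := planarAut_eq_self rfl

theorem fst_ne_zero_of_mem_basinOfAttraction {p : ℂ × ℂ} (hp : p ∈ basinOfAttraction planarAut) :
    p.1 ≠ 0 :=
  fun h => notMem_basinOfAttraction_of_isFixedPt (planarAut_eq_self h) hp

theorem eventually_petal_subset_basinOfAttraction {K : ℝ} (hK : 1 ≤ K) :
    ∀ᶠ R in atTop, petal K R ⊆ basinOfAttraction planarAut := by
  filter_upwards [eventually_iterate_mem_petal hK, eventually_ge_atTop 0] with R hiter hR p hp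
  refine ⟨fun h => fst_ne_zero_of_mem_petal hR hp (congrArg Prod.fst h), ?_⟩
  have hlim : Tendsto (fun n : ℕ => R + n / 2) atTop atTop :=
    tendsto_atTop_add_const_left _ _ (tendsto_natCast_atTop_atTop.atTop_div_const two_pos)
  refine Tendsto.mono_right ?_ (nhdsWithin_le_nhds (s := {p : ℂ × ℂ | p.1 ≠ 0}))
  exact ((tendsto_petal_smallSets hK).comp hlim).of_smallSets (.of_forall (hiter p hp))

theorem tendsto_iterate_nhdsWithin {p : ℂ × ℂ} (hp : p ∈ basinOfAttraction planarAut) :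
    Tendsto (fun n => planarAut^[n] p) atTop (𝓝[{p : ℂ × ℂ | p.1 ≠ 0}] 0) :=
  tendsto_nhdsWithin_iff.2 ⟨hp.2, .of_forall fun n => fst_ne_zero_of_mem_basinOfAttraction <|
    iterate_mem_basinOfAttraction planarAut.injective planarAut_zero hp n⟩

theorem tendsto_sec_iterate {p : ℂ × ℂ} (hp : p ∈ basinOfAttraction planarAut) :
    Tendsto (fun n => sec (planarAut^[n] p).1⁻¹) atTop atTop := by
  refine tendsto_atTop_of_eventually_add_le one_half_pos ?_
  simp only [Function.iterate_succ_apply']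
  exact (tendsto_iterate_nhdsWithin hp).eventually eventually_sec_add_le

theorem exists_eventually_mem_petal {p : ℂ × ℂ} (hp : p ∈ basinOfAttraction planarAut) :
    ∃ K ≥ 1, ∀ R, ∀ᶠ n in atTop, planarAut^[n] p ∈ petal K R := by
  have hsec := tendsto_sec_iterate hp
  obtain ⟨N, hN⟩ := eventually_atTop.1 <|
    (hp.2.eventually eventually_norm_snd_le).and (hsec.eventually_ge_atTop 0)
  have hu : 0 < ‖(planarAut^[N] p).1‖ := norm_pos_iff.2 <| fst_ne_zero_of_mem_basinOfAttraction <|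
    iterate_mem_basinOfAttraction planarAut.injective planarAut_zero hp N
  set K := max 1 (‖(planarAut^[N] p).2‖ / ‖(planarAut^[N] p).1‖)
  have hratio : ∀ n ≥ N, ‖(planarAut^[n] p).2‖ ≤ K * ‖(planarAut^[n] p).1‖ := by
    intro n hn
    induction n, hn using Nat.le_induction with
    | base => exact (div_le_iff₀ hu).1 (le_max_right _ _)
    | succ n hn ih =>
      rw [Function.iterate_succ_apply']
      exact (hN n hn).1 K (le_max_left _ _) (hN n hn).2 ih
  exact ⟨K, le_max_left _ _, fun R =>
    (hsec.eventually_gt_atTop R).and (eventually_atTop.2 ⟨N, hratio⟩)⟩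

theorem approxFatouCoord_iterate (n N : ℕ) (p : ℂ × ℂ) :
    approxFatouCoord n (planarAut^[N] p) = approxFatouCoord (n + N) p + ((N : ℂ), 0) := by
  rw [approxFatouCoord, approxFatouCoord, ← Function.iterate_add_apply]
  ext <;> simp [sub_add_eq_sub_sub]

theorem tendsto_approxFatouCoord {p : ℂ × ℂ} (hp : p ∈ basinOfAttraction planarAut) :
    Tendsto (fun n => approxFatouCoord n p) atTop (𝓝 (fatouCoord p)) := by
  obtain ⟨K, hK, hpetal⟩ := exists_eventually_mem_petal hp
  obtain ⟨C, -, hC⟩ := exists_eventually_dist_fatouCoord_le hK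
  obtain ⟨R, hR⟩ := hC.exists
  obtain ⟨N, hN⟩ := (hpetal R).exists
  refine tendsto_nhds_limUnder ⟨fatouCoord (planarAut^[N] p) - ((N : ℂ), 0), ?_⟩
  rw [← tendsto_add_atTop_iff_nat N]
  simpa [approxFatouCoord_iterate] using (hR _ hN).1.sub_const ((N : ℂ), (0 : ℂ))

theorem fatouCoord_iterate {p : ℂ × ℂ} (hp : p ∈ basinOfAttraction planarAut) (n : ℕ) :
    fatouCoord (planarAut^[n] p) = fatouCoord p + ((n : ℂ), 0) := by
  have hpn := iterate_mem_basinOfAttraction planarAut.injective planarAut_zero hp n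
  refine tendsto_nhds_unique (tendsto_approxFatouCoord hpn) ?_
  simp only [approxFatouCoord_iterate]
  exact ((tendsto_add_atTop_iff_nat n).2 (tendsto_approxFatouCoord hp)).add_const _

/-- The product of a sector and a disc, a domain in the coordinates `petalCoord`. -/
def tube (R M : ℝ) : Set (ℂ × ℂ) := {x | R < sec x.1 ∧ ‖x.2‖ < M}

theorem isOpen_tube (R M : ℝ) : IsOpen (tube R M) :=
  (isOpen_lt continuous_const (continuous_sec.comp continuous_fst)).inter
    (isOpen_lt continuous_snd.norm continuous_const)

theorem tube_subset_tube {R R' M M' : ℝ} (hR : R' ≤ R) (hM : M ≤ M') : tube R M ⊆ tube R' M' :=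
  fun _ hx => ⟨hR.trans_lt hx.1, hx.2.trans_le hM⟩

theorem concaveOn_sec : ConcaveOn ℝ univ sec := by
  refine ⟨convex_univ, fun x _ y _ a b ha hb _ => ?_⟩
  refine le_trans (le_of_eq ?_) (add_le_sec_add _ _)
  simp [sec, abs_mul, abs_of_nonneg ha, abs_of_nonneg hb, mul_sub]

theorem convex_tube (R M : ℝ) : Convex ℝ (tube R M) := by
  have hfst := (concaveOn_sec.comp_linearMap (LinearMap.fst ℝ ℂ ℂ)).convex_gt R
  have hsnd := ((convexOn_univ_norm (E := ℂ)).comp_linearMap (LinearMap.snd ℝ ℂ ℂ)).convex_lt M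
  simpa [tube, inter_def] using hfst.inter hsnd

theorem closedBall_subset_tube {R M r : ℝ} {x : ℂ × ℂ} (hx : x ∈ tube (R + 2 * r) M) :
    closedBall x r ⊆ tube R (M + r) := by
  intro z hz
  rw [mem_closedBall, dist_eq_norm] at hz
  have hfst := (norm_fst_le (z - x)).trans hz
  have hsnd := (norm_snd_le (z - x)).trans hz
  rw [Prod.fst_sub] at hfst
  rw [Prod.snd_sub] at hsnd
  have hsec : -(2 * r) ≤ sec (z.1 - x.1) := by
    have hre := neg_le_of_abs_le ((Complex.abs_re_le_norm _).trans hfst)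
    have him := (Complex.abs_im_le_norm _).trans hfst
    rw [sec]
    linarith
  have hadd := add_le_sec_add x.1 (z.1 - x.1)
  rw [add_sub_cancel] at hadd
  exact ⟨by linarith [hx.1], by linarith [hx.2, norm_le_norm_add_norm_sub' z.2 x.2]⟩

theorem exists_eventually_mem_tube {p : ℂ × ℂ} (hp : p ∈ basinOfAttraction planarAut) :
    ∃ M, ∀ R, ∀ᶠ n in atTop, petalCoord (planarAut^[n] p) ∈ tube R M := by
  obtain ⟨K, hK, hpetal⟩ := exists_eventually_mem_petal hp
  obtain ⟨C, -, hC⟩ := exists_eventually_norm_iterate_snd_le hK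
  obtain ⟨R₀, hR₀⟩ := hC.exists
  obtain ⟨N, hN⟩ := (hpetal R₀).exists
  refine ⟨‖(petalCoord (planarAut^[N] p)).2‖ + C + 1, fun R => ?_⟩
  filter_upwards [(tendsto_sec_iterate hp).eventually_gt_atTop R, eventually_ge_atTop N]
    with n hsec hn
  refine ⟨hsec, (lt_add_one _).trans_le' ?_⟩
  rw [← Nat.sub_add_cancel hn, Function.iterate_add_apply]
  exact hR₀ _ hN (n - N)

theorem petalCoord_symm_mem_petal {R M : ℝ} (hR : 0 < R) (hMR : M ^ 2 ≤ R) {x : ℂ × ℂ}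
    (hx : x ∈ tube R M) : petalCoord.symm x ∈ petal 1 R := by
  have hnorm : R < ‖x.1‖ := hx.1.trans_le (sec_le_norm _)
  have hpos : 0 < ‖x.1‖ := hR.trans hnorm
  have hsqrt : ‖x.2‖ ≤ √‖x.1‖ := hx.2.le.trans (Real.le_sqrt_of_sq_le (hMR.trans hnorm.le))
  refine ⟨by simpa [petalCoord_symm_apply] using hx.1, ?_⟩
  rw [petalCoord_symm_apply, norm_div, norm_threeHalvesPow (norm_pos_iff.1 hpos), norm_inv, one_mul,
    div_le_iff₀ (by positivity), inv_mul_cancel_left₀ hpos.ne']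
  exact hsqrt

theorem eventually_forall_petalCoord_symm_mem_petal (M : ℝ) :
    ∀ᶠ R in atTop, ∀ x ∈ tube R M, petalCoord.symm x ∈ petal 1 R := by
  filter_upwards [eventually_gt_atTop 0, eventually_ge_atTop (M ^ 2)] with R hR hMR x hx
  exact petalCoord_symm_mem_petal hR hMR hx

theorem differentiableAt_petalCoord {p : ℂ × ℂ} (h : 0 < p.1⁻¹.re) :
    DifferentiableAt ℂ petalCoord p := by
  have h0 : p.1 ≠ 0 := by
    intro h0
    simp [h0] at h
  have hinv : DifferentiableAt ℂ (fun p : ℂ × ℂ => p.1⁻¹) p := differentiableAt_fst.inv h0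
  exact hinv.prodMk <| differentiableAt_snd.mul <|
    DifferentiableAt.comp (g := threeHalvesPow) p (differentiableAt_threeHalvesPow h) hinv

theorem differentiableAt_petalCoord_symm {x : ℂ × ℂ} (h : 0 < x.1.re) :
    DifferentiableAt ℂ petalCoord.symm x := by
  have h0 : x.1 ≠ 0 := by
    intro h0
    simp [h0] at h
  have hpow : DifferentiableAt ℂ (fun x : ℂ × ℂ => threeHalvesPow x.1) x :=
    DifferentiableAt.comp (g := threeHalvesPow) x (differentiableAt_threeHalvesPow h)
      differentiableAt_fst
  refine (differentiableAt_fst.inv h0).prodMk ?_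
  simp only [div_eq_mul_inv]
  exact differentiableAt_snd.mul (hpow.inv (threeHalvesPow_ne_zero _))

theorem exists_eventually_dist_fatouCoord_tube_le (M : ℝ) :
    ∃ C, ∀ᶠ R in atTop, ∀ x ∈ tube R M, ∀ n : ℕ,
      dist (approxFatouCoord n (petalCoord.symm x)) (fatouCoord (petalCoord.symm x)) ≤
        C * (√(R + n / 2))⁻¹ := by
  obtain ⟨C, hC0, hC⟩ := exists_eventually_dist_fatouCoord_le le_rfl
  refine ⟨C * (1 + M), ?_⟩
  filter_upwards [hC, eventually_forall_petalCoord_symm_mem_petal M] with R hR hpetal x hx n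
  refine ((hR _ (hpetal x hx)).2 n).trans ?_
  rw [Equiv.apply_symm_apply]
  gcongr
  exact hx.2.le

theorem eventually_differentiableOn_fatouCoord_comp_symm (M : ℝ) :
    ∀ᶠ R in atTop, DifferentiableOn ℂ (fatouCoord ∘ petalCoord.symm) (tube R M) := by
  obtain ⟨C, hC⟩ := exists_eventually_dist_fatouCoord_tube_le M
  filter_upwards [hC, eventually_forall_petalCoord_symm_mem_petal M,
    eventually_iterate_mem_petal le_rfl, eventually_ge_atTop 0] with R hdist hpetal hiter hR
  refine differentiableOn_of_tendstoUniformlyOn (l := atTop) (isOpen_tube R M)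
    (f := fun n => approxFatouCoord n ∘ petalCoord.symm) (fun n x hx => ?_) ?_
  · have hre := hR.trans_lt (hx.1.trans_le (sec_le_re _))
    have hre' := (hiter _ (hpetal x hx) n).1.trans_le (sec_le_re _)
    have hdiff : DifferentiableAt ℂ (petalCoord ∘ planarAut^[n] ∘ petalCoord.symm) x :=
      (differentiableAt_petalCoord (hre'.trans_le' (by positivity))).comp x <|
        (differentiable_planarAut.iterate n _).comp x (differentiableAt_petalCoord_symm hre)
    exact (hdiff.sub_const ((n : ℂ), (0 : ℂ))).differentiableWithinAt
  · refine Metric.tendstoUniformlyOn_iff.2 fun ε hε => ?_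
    have hlim : Tendsto (fun n : ℕ => C * (√(R + n / 2))⁻¹) atTop (𝓝 0) := by
      simpa using (tendsto_inv_sqrt_add_half R).const_mul C
    filter_upwards [hlim.eventually_lt_const hε] with n hn x hx
    rw [dist_comm]
    exact (hdist x hx n).trans_lt hn

theorem approxFatouCoord_zero : approxFatouCoord 0 = petalCoord := by
  ext p <;> simp [approxFatouCoord]

theorem eventually_norm_fatouCoord_comp_symm_sub_le (M : ℝ) {ε : ℝ} (hε : 0 < ε) :
    ∀ᶠ R in atTop, ∀ x ∈ tube R M, ‖fatouCoord (petalCoord.symm x) - x‖ ≤ ε := by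
  obtain ⟨C, hC⟩ := exists_eventually_dist_fatouCoord_tube_le M
  have hlim : Tendsto (fun R => C * (√R)⁻¹) atTop (𝓝 0) := by
    simpa using Real.tendsto_sqrt_atTop.inv_tendsto_atTop.const_mul C
  filter_upwards [hC, hlim.eventually_le_const hε] with R hdist hR x hx
  have h := hdist x hx 0
  rw [approxFatouCoord_zero, Equiv.apply_symm_apply, Nat.cast_zero, zero_div, add_zero, dist_comm,
    dist_eq_norm] at h
  exact h.trans hR

theorem exists_fatouChart (M : ℝ) :
    ∃ R ≥ 0, ∃ e : OpenPartialHomeomorph (ℂ × ℂ) (ℂ × ℂ), e.source = tube R M ∧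
      ⇑e = fatouCoord ∘ petalCoord.symm ∧ DifferentiableOn ℂ e (tube R M) ∧
      DifferentiableOn ℂ e.symm e.target ∧ tube (R + 1) (M - 1 / 2) ⊆ e.target ∧
      ∀ x ∈ tube R M, petalCoord.symm x ∈ basinOfAttraction planarAut := by
  obtain ⟨R, hdiff, hsmall, hpetal, hbasin, hR⟩ :=
    ((eventually_differentiableOn_fatouCoord_comp_symm (M + 1)).and <|
      (eventually_norm_fatouCoord_comp_symm_sub_le (M + 1) (ε := 1 / 4) (by norm_num)).and <|
      (eventually_forall_petalCoord_symm_mem_petal (M + 1)).and <|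
      (eventually_petal_subset_basinOfAttraction le_rfl).and (eventually_ge_atTop 0)).exists
  have hsub : tube (R + 2 * 1) M ⊆ tube R (M + 1) := tube_subset_tube (by simp) (by simp)
  obtain ⟨e, hsource, he, hsymm, htarget⟩ := exists_openPartialHomeomorph_of_norm_sub_le one_pos
    (isOpen_tube _ M) (convex_tube _ M)
    (fun x hx => ball_subset_closedBall.trans (closedBall_subset_tube hx)) hdiff hsmall
    (by norm_num)
  refine ⟨R + 2 * 1, by positivity, e, hsource, he, he ▸ hdiff.mono hsub, hsymm,
    fun b hb => htarget b ?_, fun x hx => hbasin (hpetal x (hsub hx))⟩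
  convert closedBall_subset_tube (r := 1 / 2) (hb.imp ?_ id) using 2 <;> norm_num

theorem injOn_fatouCoord : InjOn fatouCoord (basinOfAttraction planarAut) := by
  intro p hp q hq heq
  obtain ⟨M₁, hM₁⟩ := exists_eventually_mem_tube hp
  obtain ⟨M₂, hM₂⟩ := exists_eventually_mem_tube hq
  obtain ⟨R, -, e, hsource, he, -⟩ := exists_fatouChart (max M₁ M₂)
  obtain ⟨n, hn₁, hn₂⟩ := ((hM₁ R).and (hM₂ R)).exists
  have hchart : e (petalCoord (planarAut^[n] p)) = e (petalCoord (planarAut^[n] q)) := by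
    simp [he, fatouCoord_iterate hp, fatouCoord_iterate hq, heq]
  have hinj := e.injOn (hsource ▸ tube_subset_tube le_rfl (le_max_left _ _) hn₁)
    (hsource ▸ tube_subset_tube le_rfl (le_max_right _ _) hn₂) hchart
  exact planarAut.injective.iterate n (petalCoord.injective hinj)

theorem differentiableOn_fatouCoord :
    DifferentiableOn ℂ fatouCoord (basinOfAttraction planarAut) := by
  intro p hp
  obtain ⟨M, hM⟩ := exists_eventually_mem_tube hp
  obtain ⟨R, hR, e, -, he, hdiff, -, -, hbasin⟩ := exists_fatouChart M
  obtain ⟨n, hn⟩ := (hM R).exists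
  have hnhds := (isOpen_tube R M).mem_nhds hn
  have hcoord : DifferentiableAt ℂ (petalCoord ∘ planarAut^[n]) p :=
    (differentiableAt_petalCoord (hR.trans_lt (hn.1.trans_le (sec_le_re _)))).comp p
      (differentiable_planarAut.iterate n p)
  have hpull : DifferentiableAt ℂ
      (fun z => e (petalCoord (planarAut^[n] z)) - ((n : ℂ), (0 : ℂ))) p :=
    ((hdiff.differentiableAt hnhds).comp p hcoord).sub_const _
  refine (hpull.congr_of_eventuallyEq ?_).differentiableWithinAt
  filter_upwards [hcoord.continuousAt.preimage_mem_nhds hnhds] with z hz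
  have hzbasin := hbasin _ hz
  rw [Function.comp_apply, Equiv.symm_apply_apply] at hzbasin
  simp [he, fatouCoord_iterate (mem_basinOfAttraction_of_iterate planarAut_zero hzbasin)]

theorem iterate_symm_mem_basinOfAttraction {p : ℂ × ℂ} (hp : p ∈ basinOfAttraction planarAut)
    (n : ℕ) : planarAut.symm^[n] p ∈ basinOfAttraction planarAut :=
  mem_basinOfAttraction_of_iterate planarAut_zero (n := n) <| by
    rwa [(planarAut.rightInverse_symm.iterate n).eq]

theorem fatouCoord_iterate_symm {p : ℂ × ℂ} (hp : p ∈ basinOfAttraction planarAut) (n : ℕ) :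
    fatouCoord (planarAut.symm^[n] p) = fatouCoord p - ((n : ℂ), 0) := by
  rw [eq_sub_iff_add_eq, ← fatouCoord_iterate (iterate_symm_mem_basinOfAttraction hp n),
    (planarAut.rightInverse_symm.iterate n).eq]

theorem exists_local_section_fatouCoord (q : ℂ × ℂ) :
    ∃ σ : ℂ × ℂ → ℂ × ℂ, DifferentiableAt ℂ σ q ∧
      ∀ᶠ z in 𝓝 q, σ z ∈ basinOfAttraction planarAut ∧ fatouCoord (σ z) = z := by
  obtain ⟨R, hR, e, hsource, he, -, hsymm, htarget, hbasin⟩ := exists_fatouChart (‖q.2‖ + 1)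
  obtain ⟨n, hn⟩ := exists_nat_gt (R + 1 - sec q.1)
  have hmem : q + ((n : ℂ), (0 : ℂ)) ∈ e.target := by
    refine htarget ⟨?_, ?_⟩
    · have := sec_add_real q.1 n
      push_cast at this
      rw [Prod.fst_add, this]
      linarith
    · simp only [Prod.snd_add, add_zero]
      linarith
  have htrans : DifferentiableAt ℂ (fun z : ℂ × ℂ => z + ((n : ℂ), (0 : ℂ))) q := by fun_prop
  have hnhds := e.open_target.mem_nhds hmem
  have htube {z : ℂ × ℂ} (hz : z ∈ e.target) : e.symm z ∈ tube R (‖q.2‖ + 1) :=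
    hsource ▸ e.map_target hz
  refine ⟨fun z => planarAut.symm^[n] (petalCoord.symm (e.symm (z + ((n : ℂ), (0 : ℂ))))), ?_, ?_⟩
  · have hre := hR.trans_lt ((htube hmem).1.trans_le (sec_le_re _))
    exact (differentiable_planarAut_symm.iterate n _).comp q <|
      (differentiableAt_petalCoord_symm hre).comp q <|
        (hsymm.differentiableAt hnhds).comp q htrans
  · filter_upwards [htrans.continuousAt.preimage_mem_nhds hnhds] with z hz
    have hzbasin := hbasin _ (htube hz)
    refine ⟨iterate_symm_mem_basinOfAttraction hzbasin n, ?_⟩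
    rw [fatouCoord_iterate_symm hzbasin, sub_eq_iff_eq_add]
    exact (congrFun he _).symm.trans (e.right_inv hz)

theorem exists_isBiholomorphism_basinOfAttraction_planarAut :
    ∃ Ψ, IsBiholomorphism fatouCoord Ψ (basinOfAttraction planarAut) univ :=
  exists_isBiholomorphism_of_local_sections differentiableOn_fatouCoord injOn_fatouCoord
    (mapsTo_univ _ _) fun q _ => exists_local_section_fatouCoord q

/-! ### Lifting planar automorphisms to `ℂ^(m + 2)` -/

theorem tendsto_zero_of_tendsto_pow_zero {ι 𝕜 : Type*} [NormedDivisionRing 𝕜] {l : Filter ι}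
    {z : ι → 𝕜} {n : ℕ} (h : Tendsto (fun i => z i ^ n) l (𝓝 0)) : Tendsto z l (𝓝 0) := by
  rw [Metric.tendsto_nhds] at h ⊢
  intro ε hε
  filter_upwards [h (ε ^ n) (by positivity)] with i hi
  rw [dist_zero_right, norm_pow] at hi
  rw [dist_zero_right]
  exact lt_of_pow_lt_pow_left₀ n hε.le hi

section Lift

variable {m : ℕ}

/-- The projection `(y, x₀, …, x_m) ↦ (x₀ ⋯ x_m, y)` from `ℂ^(m + 2)` to `ℂ²`. -/
def proj (x : Fin (m + 2) → ℂ) : ℂ × ℂ := (∏ i : Fin (m + 1), x i.succ, x 0)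

theorem proj_zero : proj (0 : Fin (m + 2) → ℂ) = 0 := by
  simp [proj]

theorem differentiable_proj : Differentiable ℂ (proj : (Fin (m + 2) → ℂ) → ℂ × ℂ) := by
  unfold proj
  fun_prop

theorem succ_ne_zero_of_proj_fst_ne_zero {x : Fin (m + 2) → ℂ} (h : (proj x).1 ≠ 0)
    (i : Fin (m + 1)) : x i.succ ≠ 0 :=
  fun hi => h (Finset.prod_eq_zero (Finset.mem_univ i) hi)

/-- The point `(y, e ^ (c / (m + 1)) x₀, …, e ^ (c / (m + 1)) x_m)`: the factor `e ^ c` is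
distributed evenly among the factors of the first coordinate of `proj x`. -/
noncomputable def rescale (c y : ℂ) (x : Fin (m + 2) → ℂ) : Fin (m + 2) → ℂ :=
  Matrix.vecCons y fun i => exp (c / (m + 1)) * x i.succ

theorem rescale_zero (c y : ℂ) (x : Fin (m + 2) → ℂ) : rescale c y x 0 = y := rfl

theorem rescale_succ (c y : ℂ) (x : Fin (m + 2) → ℂ) (i : Fin (m + 1)) :
    rescale c y x i.succ = exp (c / (m + 1)) * x i.succ := rfl

theorem exp_div_pow (c : ℂ) : exp (c / (m + 1)) ^ (m + 1) = exp c := by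
  rw [← Complex.exp_nat_mul]
  push_cast
  rw [mul_div_cancel₀ _ (Nat.cast_add_one_ne_zero m)]

theorem proj_rescale (c y : ℂ) (x : Fin (m + 2) → ℂ) :
    proj (rescale c y x) = (exp c * (proj x).1, y) := by
  simp only [proj, rescale_zero, rescale_succ, Finset.prod_mul_distrib, Finset.prod_const,
    Finset.card_univ, Fintype.card_fin, exp_div_pow]

theorem rescale_rescale (c c' y y' : ℂ) (x : Fin (m + 2) → ℂ) :
    rescale c y (rescale c' y' x) = rescale (c + c') y x := by
  funext i
  refine Fin.cases rfl (fun i => ?_) i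
  simp only [rescale_succ, ← mul_assoc, ← Complex.exp_add, ← add_div]

theorem rescale_zero_proj_snd (x : Fin (m + 2) → ℂ) : rescale 0 (proj x).2 x = x := by
  funext i
  refine Fin.cases rfl (fun i => ?_) i
  simp [rescale_succ]

theorem differentiable_rescale {c y : (Fin (m + 2) → ℂ) → ℂ} (hc : Differentiable ℂ c)
    (hy : Differentiable ℂ y) : Differentiable ℂ fun x => rescale (c x) (y x) x := by
  refine differentiable_pi.2 fun i => ?_
  refine Fin.cases hy (fun i => ?_) i
  simp only [rescale_succ]
  fun_prop

variable {g : Equiv.Perm (ℂ × ℂ)} {v : ℂ × ℂ → ℂ} (hv : ∀ p, (g p).1 = exp (v p) * p.1)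

include hv

theorem proj_rescale_eq_apply (x : Fin (m + 2) → ℂ) :
    proj (rescale (v (proj x)) (g (proj x)).2 x) = g (proj x) := by
  rw [proj_rescale, ← hv]

theorem proj_rescale_eq_symm_apply (x : Fin (m + 2) → ℂ) :
    proj (rescale (-v (g.symm (proj x))) (g.symm (proj x)).2 x) = g.symm (proj x) := by
  have h := hv (g.symm (proj x))
  rw [g.apply_symm_apply] at h
  rw [proj_rescale, h, ← mul_assoc, ← Complex.exp_add, neg_add_cancel, Complex.exp_zero, one_mul]

/-- The lift of a planar automorphism `g` which multiplies the first coordinate by `e ^ v` to an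
automorphism of `ℂ^(m + 2)` semiconjugate to `g` by `proj`. -/
noncomputable def lift : Equiv.Perm (Fin (m + 2) → ℂ) where
  toFun x := rescale (v (proj x)) (g (proj x)).2 x
  invFun x := rescale (-v (g.symm (proj x))) (g.symm (proj x)).2 x
  left_inv x := by
    simp only [proj_rescale_eq_apply hv, rescale_rescale, g.symm_apply_apply, neg_add_cancel,
      rescale_zero_proj_snd]
  right_inv x := by
    simp only [proj_rescale_eq_symm_apply hv, rescale_rescale, g.apply_symm_apply, add_neg_cancel,
      rescale_zero_proj_snd]

theorem lift_apply (x : Fin (m + 2) → ℂ) :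
    lift hv x = rescale (v (proj x)) (g (proj x)).2 x := rfl

theorem differentiable_lift (hg : Differentiable ℂ g) (hdv : Differentiable ℂ v) :
    Differentiable ℂ (lift (m := m) hv) :=
  differentiable_rescale (hdv.comp differentiable_proj) (hg.comp differentiable_proj).snd

theorem differentiable_lift_symm (hg : Differentiable ℂ g.symm) (hdv : Differentiable ℂ v) :
    Differentiable ℂ (lift (m := m) hv).symm :=
  differentiable_rescale (hdv.comp (hg.comp differentiable_proj)).neg
    (hg.comp differentiable_proj).snd

theorem hasFDerivAt_lift (hg : HasFDerivAt g (ContinuousLinearMap.id ℂ (ℂ × ℂ)) 0)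
    (hdv : DifferentiableAt ℂ v 0) (hv0 : v 0 = 0) :
    HasFDerivAt (lift hv) (ContinuousLinearMap.id ℂ (Fin (m + 2) → ℂ)) 0 := by
  have hproj : DifferentiableAt ℂ (proj : (Fin (m + 2) → ℂ) → ℂ × ℂ) 0 := differentiable_proj 0
  rw [← proj_zero (m := m)] at hg hdv
  refine hasFDerivAt_pi'.2 fun i => Fin.cases ?_ (fun i => ?_) i
  · exact (hg.comp _ (hproj.fst.hasFDerivAt.prodMk (hasFDerivAt_apply 0 _))).snd
  · have hvproj : DifferentiableAt ℂ (fun x : Fin (m + 2) → ℂ => v (proj x)) 0 :=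
      hdv.comp 0 hproj
    have hexp : DifferentiableAt ℂ (fun x : Fin (m + 2) → ℂ => exp (v (proj x) / (m + 1))) 0 := by
      simp only [div_eq_mul_inv]
      exact (hvproj.mul_const _).cexp
    refine (hexp.hasFDerivAt.mul (hasFDerivAt_apply i.succ 0)).congr_fderiv ?_
    ext x
    simp [proj_zero, hv0]

theorem semiconj_proj_lift : Function.Semiconj proj (lift (m := m) hv) g :=
  proj_rescale_eq_apply hv

theorem proj_iterate_lift (n : ℕ) (x : Fin (m + 2) → ℂ) :
    proj ((lift hv)^[n] x) = g^[n] (proj x) :=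
  (semiconj_proj_lift hv).iterate_right n x

theorem iterate_lift_succ_pow (n : ℕ) (x : Fin (m + 2) → ℂ) (i : Fin (m + 1)) :
    ((lift hv)^[n] x) i.succ ^ (m + 1) * (proj x).1
      = x i.succ ^ (m + 1) * (g^[n] (proj x)).1 := by
  induction n with
  | zero => rfl
  | succ n ih =>
    rw [Function.iterate_succ_apply', Function.iterate_succ_apply', hv, lift_apply, rescale_succ,
      proj_iterate_lift, mul_pow, exp_div_pow, mul_assoc, ih, mul_left_comm]

theorem tendsto_iterate_lift_of_tendsto {x : Fin (m + 2) → ℂ} (hx : (proj x).1 ≠ 0)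
    (h : Tendsto (fun n => g^[n] (proj x)) atTop (𝓝 0)) :
    Tendsto (fun n => (lift hv)^[n] x) atTop (𝓝 0) := by
  refine tendsto_pi_nhds.2 fun i => Fin.cases ?_ (fun i => ?_) i
  · exact h.snd_nhds.congr fun n => congrArg Prod.snd (proj_iterate_lift hv n x).symm
  · refine tendsto_zero_of_tendsto_pow_zero (n := m + 1) ?_
    have hlim := h.fst_nhds.const_mul (x i.succ ^ (m + 1) / (proj x).1)
    rw [Prod.fst_zero, mul_zero] at hlim
    refine hlim.congr fun n => ?_
    rw [div_mul_eq_mul_div, ← iterate_lift_succ_pow hv, mul_div_cancel_right₀ _ hx]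

theorem basinOfAttraction_lift (hfix : ∀ p : ℂ × ℂ, p.1 = 0 → g p = p)
    (hv0 : ∀ p : ℂ × ℂ, p.1 = 0 → v p = 0) :
    basinOfAttraction (lift (m := m) hv) = proj ⁻¹' basinOfAttraction g := by
  ext x
  constructor
  · refine fun hx => ⟨fun h0 => ?_, ?_⟩
    · have hfst : (proj x).1 = 0 := by rw [h0, Prod.fst_zero]
      have hxfix : lift hv x = x := by
        rw [lift_apply, hfix _ hfst, hv0 _ hfst, rescale_zero_proj_snd]
      exact notMem_basinOfAttraction_of_isFixedPt hxfix hx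
    · have h := (differentiable_proj (m := m)).continuous.tendsto 0 |>.comp hx.2
      rw [proj_zero] at h
      exact h.congr fun n => proj_iterate_lift hv n x
  · intro hx
    have hfst : (proj x).1 ≠ 0 := fun h =>
      notMem_basinOfAttraction_of_isFixedPt (hfix _ h) hx
    exact ⟨fun h => hx.1 (by rw [h, proj_zero]), tendsto_iterate_lift_of_tendsto hv hfst hx.2⟩

end Lift

section Splitting

variable {m : ℕ}

/-- The coordinates `((x₁, …, x_m), proj x)` of a point `x = (y, x₀, …, x_m)`. -/
def split (x : Fin (m + 2) → ℂ) : (Fin m → ℂ) × ℂ × ℂ := (fun i => x i.succ.succ, proj x)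

/-- The inverse of `split` where the product of the coordinates `x₁, …, x_m` does not vanish. -/
noncomputable def unsplit (q : (Fin m → ℂ) × ℂ × ℂ) : Fin (m + 2) → ℂ :=
  Matrix.vecCons q.2.2 (Matrix.vecCons (q.2.1 / ∏ i, q.1 i) q.1)

theorem split_unsplit {q : (Fin m → ℂ) × ℂ × ℂ} (hq : ∀ i, q.1 i ≠ 0) : split (unsplit q) = q := by
  refine Prod.ext rfl (Prod.ext ?_ rfl)
  simp only [split, proj, unsplit, Matrix.cons_val_succ, Fin.prod_univ_succ, Matrix.cons_val_zero]
  exact div_mul_cancel₀ _ (Finset.prod_ne_zero_iff.2 fun i _ => hq i)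

theorem unsplit_split {x : Fin (m + 2) → ℂ} (hx : ∀ i : Fin m, x i.succ.succ ≠ 0) :
    unsplit (split x) = x := by
  funext i
  refine Fin.cases rfl (Fin.cases ?_ fun i => rfl) i
  simp only [unsplit, split, proj, Matrix.cons_val_succ, Matrix.cons_val_zero, Fin.prod_univ_succ]
  exact mul_div_cancel_right₀ _ (Finset.prod_ne_zero_iff.2 fun i _ => hx i)

theorem differentiableAt_unsplit {q : (Fin m → ℂ) × ℂ × ℂ} (hq : ∀ i, q.1 i ≠ 0) :
    DifferentiableAt ℂ unsplit q := by
  have hprod : ∏ i, q.1 i ≠ 0 := Finset.prod_ne_zero_iff.2 fun i _ => hq i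
  have hdiff : DifferentiableAt ℂ (fun q : (Fin m → ℂ) × ℂ × ℂ => ∏ i, q.1 i) q := by fun_prop
  refine differentiableAt_pi.2 fun i => Fin.cases ?_ (Fin.cases ?_ fun i => ?_) i
  · exact differentiableAt_snd.snd
  · simp only [unsplit, Matrix.cons_val_succ, Matrix.cons_val_zero, div_eq_mul_inv]
    exact differentiableAt_snd.fst.mul (hdiff.inv hprod)
  · simp only [unsplit, Matrix.cons_val_succ]
    fun_prop

theorem isBiholomorphism_split {B : Set (ℂ × ℂ)} (hB : ∀ p ∈ B, p.1 ≠ 0) :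
    IsBiholomorphism split unsplit ((proj : (Fin (m + 2) → ℂ) → ℂ × ℂ) ⁻¹' B)
      ({c : Fin m → ℂ | ∀ i, c i ≠ 0} ×ˢ B) where
  differentiableOn := by
    have h := differentiable_proj (m := m)
    unfold split
    fun_prop
  differentiableOn_inv _ hq := (differentiableAt_unsplit hq.1).differentiableWithinAt
  mapsTo _ hx := ⟨fun i => succ_ne_zero_of_proj_fst_ne_zero (hB _ hx) i.succ, hx⟩
  mapsTo_inv q hq := by
    have h : proj (unsplit q) = q.2 := congrArg Prod.snd (split_unsplit hq.1)
    rw [mem_preimage, h]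
    exact hq.2
  invOn := ⟨fun _ hx => unsplit_split fun i => succ_ne_zero_of_proj_fst_ne_zero (hB _ hx) i.succ,
    fun _ hq => split_unsplit hq.1⟩

end Splitting

end ParabolicBasin

open ParabolicBasin in
theorem exists_automorphism_basin_biholomorphic_general (m : ℕ) :
    ∃ F : (Fin (m + 2) → ℂ) ≃ (Fin (m + 2) → ℂ), Differentiable ℂ F ∧ Differentiable ℂ F.symm ∧
      F 0 = 0 ∧ HasFDerivAt F (ContinuousLinearMap.id ℂ _) 0 ∧
      ∃ Φ Ψ, IsBiholomorphism Φ Ψ (basinOfAttraction F)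
        {q : (Fin m → ℂ) × ℂ × ℂ | ∀ i, q.1 i ≠ 0} := by
  have hv : ∀ p, (planarAut p).1 = Complex.exp ((-exponent) p) * p.1 := planarAut_fst
  have hdv : Differentiable ℂ (-exponent) := differentiable_exponent.neg
  have hv0 : ∀ p : ℂ × ℂ, p.1 = 0 → (-exponent) p = 0 := fun p hp => by
    simp [exponent_eq_zero hp]
  obtain ⟨Ψ, hΨ⟩ := exists_isBiholomorphism_basinOfAttraction_planarAut
  refine ⟨lift hv, differentiable_lift hv differentiable_planarAut hdv,
    differentiable_lift_symm hv differentiable_planarAut_symm hdv, ?_,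
    hasFDerivAt_lift hv hasFDerivAt_planarAut (hdv 0) (hv0 0 rfl),
    Prod.map id fatouCoord ∘ split, unsplit ∘ Prod.map id Ψ, ?_⟩
  · rw [lift_apply, proj_zero, planarAut_zero, hv0 0 rfl, ← proj_zero, rescale_zero_proj_snd]
  · have hmodel : {q : (Fin m → ℂ) × ℂ × ℂ | ∀ i, q.1 i ≠ 0}
        = {c : Fin m → ℂ | ∀ i, c i ≠ 0} ×ˢ univ := by
      rw [Set.prod_univ]
      rfl
    rw [basinOfAttraction_lift hv (fun p => planarAut_eq_self) hv0, hmodel]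
    exact (isBiholomorphism_split fun p => fst_ne_zero_of_mem_basinOfAttraction).trans
      (hΨ.prodMap_id _)

/-- For every integer `k ≥ 3` there exists a holomorphic automorphism `F` of
`ℂ^k` tangent to the identity at the origin whose basin of attraction
`Ω = {p ≠ 0 : F^[n] p → 0}` is biholomorphic to `(ℂ*)^(k-2) × ℂ²`. -/
theorem exists_automorphism_basin_biholomorphic (k : ℕ) (hk : 3 ≤ k) :
    ∃ F : (Fin k → ℂ) → (Fin k → ℂ),
      -- `F` is a holomorphic automorphism of `ℂ^k`
      Differentiable ℂ F ∧ Function.Bijective F ∧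
      (∃ Finv : (Fin k → ℂ) → (Fin k → ℂ), Differentiable ℂ Finv ∧
        Function.LeftInverse Finv F ∧ Function.RightInverse Finv F) ∧
      -- `F` is tangent to the identity at the origin
      F 0 = 0 ∧ fderiv ℂ F 0 = ContinuousLinearMap.id ℂ (Fin k → ℂ) ∧
      -- the basin of attraction is biholomorphic to `(ℂ*)^(k-2) × ℂ²`
      (∃ (Φ : (Fin k → ℂ) → (Fin (k - 2) → ℂ) × ℂ × ℂ)
         (Ψ : (Fin (k - 2) → ℂ) × ℂ × ℂ → (Fin k → ℂ)),
        DifferentiableOn ℂ Φ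
          {p : Fin k → ℂ | p ≠ 0 ∧ Tendsto (fun n => F^[n] p) atTop (nhds 0)} ∧
        DifferentiableOn ℂ Ψ {q : (Fin (k - 2) → ℂ) × ℂ × ℂ | ∀ i, q.1 i ≠ 0} ∧
        Set.BijOn Φ
          {p : Fin k → ℂ | p ≠ 0 ∧ Tendsto (fun n => F^[n] p) atTop (nhds 0)}
          {q : (Fin (k - 2) → ℂ) × ℂ × ℂ | ∀ i, q.1 i ≠ 0} ∧
        (∀ p ∈ {p : Fin k → ℂ | p ≠ 0 ∧ Tendsto (fun n => F^[n] p) atTop (nhds 0)},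
          Ψ (Φ p) = p) ∧
        (∀ q ∈ {q : (Fin (k - 2) → ℂ) × ℂ × ℂ | ∀ i, q.1 i ≠ 0}, Φ (Ψ q) = q)) := by
  obtain ⟨m, rfl⟩ : ∃ m, k = m + 2 := ⟨k - 2, by omega⟩
  obtain ⟨F, hF, hF', h0, hd, Φ, Ψ, h⟩ := exists_automorphism_basin_biholomorphic_general m
  exact ⟨F, hF, F.bijective, ⟨F.symm, hF', F.left_inv, F.right_inv⟩, h0, hd.fderiv, Φ, Ψ,
    h.differentiableOn, h.differentiableOn_inv, h.bijOn, h.invOn.1, h.invOn.2⟩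
end

section
/- For any nonzero complex numbers a, b, c, the map F = φ₃ ∘ φ₂⁻¹ ∘ φ₁⁻¹ ∘ φ₂ ∘ φ₁ is a holomorphic automorphism of ℂ³ tangent to the identity at the origin (F(0) = 0 and DF(0) = Id), and there exist entire functions h₁,…,h₇ : ℂ³ → ℂ such that, writing ζ = z·t, the components of F = (F₁, F₂, F₃) satisfy: F₁(z,t,w) = z·(1 − aζ + ζ²·h₁(z,t,w) + ζw·h₂(z,t,w)), F₂(z,t,w) = t·(1 − bζ + ζ²·h₃(z,t,w) + ζw·h₄(z,t,w)), and F₃(z,t,w) = w·(1 − cζ + ζ²·h₅(z,t,w) + ζw·h₆(z,t,w)) + ζ³·h₇(z,t,w). -/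
/-!
Write `ζ = zt`, `s = a + b`, `E = exp (s(w - ζ))` and `P = exp (-sζE)`. Composing the factors gives
`F₁ = z exp (-aζE)`, `F₂ = t exp (-bζE)` and `F₃ = (w + ζ(E - 1)) exp (-(s + c)ζP) + sζ²P²`.

In the ring of entire functions put `J = (ζ, w)`. The claimed error terms are exactly the elements
of `ζJ` for `F₁ / z` and `F₂ / t`, and of `ζJ²` for `F₃`. Since `exp f ≡ 1 + f` modulo the square of
any ideal containing `f`, both `E` and `P` are `1` modulo `J`, so `exp (-dζE) ≡ 1 - dζ` modulo `ζJ`,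
and likewise for `P`. In `F₃` the summand `sζ²P²` coming from `(a + b)z²t²` cancels the term `-sζ²`
of `ζ(E - 1) ≡ sζ(w - ζ)`, the only one outside `ζJ²` not divisible by `w`.

Tangency to the identity is read off from this form of `F`.
-/

open Filter Set

/-- The shear `φ₁(z,t,w) = (z, t, w − zt)`. -/
noncomputable def φ₁ (p : ℂ × ℂ × ℂ) : ℂ × ℂ × ℂ :=
  (p.1, p.2.1, p.2.2 - p.1 * p.2.1)

/-- The inverse shear `φ₁⁻¹(z,t,w) = (z, t, w + zt)`. -/
noncomputable def φ₁inv (p : ℂ × ℂ × ℂ) : ℂ × ℂ × ℂ :=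
  (p.1, p.2.1, p.2.2 + p.1 * p.2.1)

/-- The overshear `φ₂(z,t,w) = (z·e^{aw}, t·e^{bw}, w)`. -/
noncomputable def φ₂ (a b : ℂ) (p : ℂ × ℂ × ℂ) : ℂ × ℂ × ℂ :=
  (p.1 * Complex.exp (a * p.2.2), p.2.1 * Complex.exp (b * p.2.2), p.2.2)

/-- The inverse overshear `φ₂⁻¹(z,t,w) = (z·e^{−aw}, t·e^{−bw}, w)`. -/
noncomputable def φ₂inv (a b : ℂ) (p : ℂ × ℂ × ℂ) : ℂ × ℂ × ℂ :=
  (p.1 * Complex.exp (-(a * p.2.2)), p.2.1 * Complex.exp (-(b * p.2.2)), p.2.2)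

/-- The overshear `φ₃(z,t,w) = (z, t, w·e^{−(a+b+c)zt} + (a+b)z²t²)`. -/
noncomputable def φ₃ (a b c : ℂ) (p : ℂ × ℂ × ℂ) : ℂ × ℂ × ℂ :=
  (p.1, p.2.1,
    p.2.2 * Complex.exp (-((a + b + c) * p.1 * p.2.1)) + (a + b) * p.1 ^ 2 * p.2.1 ^ 2)

/-- The automorphism `F = φ₃ ∘ φ₂⁻¹ ∘ φ₁⁻¹ ∘ φ₂ ∘ φ₁` of `ℂ³`. -/
noncomputable def Fmap (a b c : ℂ) : ℂ × ℂ × ℂ → ℂ × ℂ × ℂ :=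
  φ₃ a b c ∘ φ₂inv a b ∘ φ₁inv ∘ φ₂ a b ∘ φ₁

/-- The projection `π(z,t,w) = (zt, w)`. -/
def πmap (p : ℂ × ℂ × ℂ) : ℂ × ℂ := (p.1 * p.2.1, p.2.2)

/-- The basin of attraction `Ω = {p ∈ ℂ³ \ {0} : F^[n] p → 0}` of `F`. -/
noncomputable def basinF (a b c : ℂ) : Set (ℂ × ℂ × ℂ) :=
  {p | p ≠ 0 ∧ Tendsto (fun n => (Fmap a b c)^[n] p) atTop (nhds 0)}

/-- The basin of attraction `Ω̃ = {q ∈ ℂ² \ {0} : G^[n] q → 0}` of a map `G : ℂ² → ℂ²`. -/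
noncomputable def basinG (G : ℂ × ℂ → ℂ × ℂ) : Set (ℂ × ℂ) :=
  {q | q ≠ 0 ∧ Tendsto (fun n => G^[n] q) atTop (nhds 0)}

section Biholomorphism

variable {E F G : Type*} [NormedAddCommGroup E] [NormedSpace ℂ E] [NormedAddCommGroup F]
  [NormedSpace ℂ F] [NormedAddCommGroup G] [NormedSpace ℂ G]

/-- `f` and `g` are mutually inverse holomorphic maps. Keeping the inverse as an argument, rather
than hiding it in an existential, makes the notion symmetric in `f` and `g`. -/
structure IsBiholomorphicPair (f : E → F) (g : F → E) : Prop where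
  differentiable : Differentiable ℂ f
  differentiable_inv : Differentiable ℂ g
  leftInverse : Function.LeftInverse g f
  rightInverse : Function.RightInverse g f

namespace IsBiholomorphicPair

lemma symm {f : E → F} {g : F → E} (h : IsBiholomorphicPair f g) : IsBiholomorphicPair g f :=
  ⟨h.differentiable_inv, h.differentiable, h.rightInverse, h.leftInverse⟩

lemma comp {f : E → F} {g : F → E} {f' : F → G} {g' : G → F} (h' : IsBiholomorphicPair f' g')
    (h : IsBiholomorphicPair f g) : IsBiholomorphicPair (f' ∘ f) (g ∘ g') where
  differentiable := h'.differentiable.comp h.differentiable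
  differentiable_inv := h.differentiable_inv.comp h'.differentiable_inv
  leftInverse := h'.leftInverse.comp h.leftInverse
  rightInverse := h'.rightInverse.comp h.rightInverse

lemma bijective {f : E → F} {g : F → E} (h : IsBiholomorphicPair f g) : Function.Bijective f :=
  ⟨h.leftInverse.injective, h.rightInverse.surjective⟩

end IsBiholomorphicPair

end Biholomorphism

/-- The inverse overshear `φ₃⁻¹(z,t,w) = (z, t, (w − (a+b)z²t²)·e^{(a+b+c)zt})`. -/
noncomputable def φ₃inv (a b c : ℂ) (p : ℂ × ℂ × ℂ) : ℂ × ℂ × ℂ :=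
  (p.1, p.2.1,
    (p.2.2 - (a + b) * p.1 ^ 2 * p.2.1 ^ 2) * Complex.exp ((a + b + c) * p.1 * p.2.1))

lemma isBiholomorphicPair_φ₁ : IsBiholomorphicPair φ₁ φ₁inv where
  differentiable := by unfold φ₁; fun_prop
  differentiable_inv := by unfold φ₁inv; fun_prop
  leftInverse p := by simp [φ₁, φ₁inv]
  rightInverse p := by simp [φ₁, φ₁inv]

lemma isBiholomorphicPair_φ₂ (a b : ℂ) : IsBiholomorphicPair (φ₂ a b) (φ₂inv a b) where
  differentiable := by unfold φ₂; fun_prop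
  differentiable_inv := by unfold φ₂inv; fun_prop
  leftInverse p := by simp [φ₂, φ₂inv, mul_assoc, ← Complex.exp_add]
  rightInverse p := by simp [φ₂, φ₂inv, mul_assoc, ← Complex.exp_add]

lemma isBiholomorphicPair_φ₃ (a b c : ℂ) : IsBiholomorphicPair (φ₃ a b c) (φ₃inv a b c) where
  differentiable := by unfold φ₃; fun_prop
  differentiable_inv := by unfold φ₃inv; fun_prop
  leftInverse p := by simp [φ₃, φ₃inv, mul_assoc, ← Complex.exp_add]
  rightInverse p := by simp [φ₃, φ₃inv, mul_assoc, ← Complex.exp_add]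

lemma exists_isBiholomorphicPair_Fmap (a b c : ℂ) :
    ∃ Finv, IsBiholomorphicPair (Fmap a b c) Finv :=
  have h₁ := isBiholomorphicPair_φ₁
  have h₂ := isBiholomorphicPair_φ₂ a b
  ⟨_, (isBiholomorphicPair_φ₃ a b c).comp <| h₂.symm.comp <| h₁.symm.comp <| h₂.comp h₁⟩

lemma φ₂_φ₁_commutator_apply (a b z t w : ℂ) {E : ℂ}
    (hE : E = Complex.exp ((a + b) * (w - z * t))) :
    φ₂inv a b (φ₁inv (φ₂ a b (φ₁ (z, t, w)))) =
      (z * Complex.exp (-(a * (z * t) * E)), t * Complex.exp (-(b * (z * t) * E)),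
        w + z * t * (E - 1)) := by
  have hw : w - z * t + z * Complex.exp (a * (w - z * t)) * (t * Complex.exp (b * (w - z * t))) =
      w + z * t * (E - 1) := by
    rw [hE, add_mul, Complex.exp_add]
    ring
  have hexp (d : ℂ) :
      Complex.exp (d * (w - z * t)) * Complex.exp (-(d * (w + z * t * (E - 1)))) =
        Complex.exp (-(d * (z * t) * E)) := by
    rw [← Complex.exp_add]
    ring_nf
  simp only [φ₁, φ₂, φ₁inv, φ₂inv, hw]
  rw [mul_assoc z, mul_assoc t, hexp, hexp]

lemma Fmap_apply (a b c z t w : ℂ) {E P : ℂ} (hE : E = Complex.exp ((a + b) * (w - z * t)))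
    (hP : P = Complex.exp (-((a + b) * (z * t) * E))) :
    Fmap a b c (z, t, w) =
      (z * Complex.exp (-(a * (z * t) * E)), t * Complex.exp (-(b * (z * t) * E)),
        (w + z * t * (E - 1)) * Complex.exp (-((a + b + c) * (z * t) * P)) +
          (a + b) * (z * t) ^ 2 * P ^ 2) := by
  have hP' : P = Complex.exp (-(a * (z * t) * E)) * Complex.exp (-(b * (z * t) * E)) := by
    rw [hP, ← Complex.exp_add]
    ring_nf
  simp only [Fmap, Function.comp_apply, φ₂_φ₁_commutator_apply a b z t w hE, φ₃, Prod.mk.injEq,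
    true_and]
  rw [hP']
  ring_nf

section Ideal

variable {R : Type*} [CommRing R] {x y f : R}

lemma mem_span_singleton_mul_span_pair :
    f ∈ Ideal.span {x} * Ideal.span {x, y} ↔ ∃ h k, f = x ^ 2 * h + x * y * k := by
  rw [Ideal.mem_span_singleton_mul]
  constructor
  · rintro ⟨g, hg, rfl⟩
    obtain ⟨h, k, rfl⟩ := Ideal.mem_span_pair.1 hg
    exact ⟨h, k, by ring⟩
  · rintro ⟨h, k, rfl⟩
    exact ⟨h * x + k * y, Ideal.mem_span_pair.2 ⟨h, k, rfl⟩, by ring⟩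

lemma mem_span_singleton_mul_span_pair_sq :
    f ∈ Ideal.span {x} * Ideal.span {x, y} ^ 2 ↔
      ∃ h k l, f = y * (x ^ 2 * h + x * y * k) + x ^ 3 * l := by
  rw [Ideal.mem_span_singleton_mul, sq, Ideal.span_pair_mul_span_pair]
  simp only [Ideal.mem_span_insert, Ideal.mem_span_singleton']
  constructor
  · rintro ⟨_, ⟨l, _, ⟨h, _, ⟨h', _, ⟨k, rfl⟩, rfl⟩, rfl⟩, rfl⟩, rfl⟩
    exact ⟨h + h', k, l, by ring⟩
  · rintro ⟨h, k, l, rfl⟩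
    exact ⟨_, ⟨l, _, ⟨h, _, ⟨0, _, ⟨k, rfl⟩, rfl⟩, rfl⟩, rfl⟩, by ring⟩

lemma third_component_sub_mem {J : Ideal R} {ζ w s c E P Q : R} (hζ : ζ ∈ J) (hw : w ∈ J)
    (hE : E - (1 + s * (w - ζ)) ∈ J ^ 2) (hP : P - 1 ∈ J)
    (hQ : Q - (1 - (s + c) * ζ) ∈ Ideal.span {ζ} * J) :
    (w + ζ * (E - 1)) * Q + s * ζ ^ 2 * P ^ 2 - w * (1 - c * ζ) ∈ Ideal.span {ζ} * J ^ 2 := by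
  have hζmul {g : R} (hg : g ∈ J ^ 2) : ζ * g ∈ Ideal.span {ζ} * J ^ 2 :=
    Ideal.mul_mem_mul (Ideal.mem_span_singleton_self ζ) hg
  have hwζ : w - ζ ∈ J := sub_mem hw hζ
  have hE' : Q * (ζ * (E - (1 + s * (w - ζ)))) ∈ Ideal.span {ζ} * J ^ 2 :=
    Ideal.mul_mem_left _ _ (hζmul hE)
  have hQ' : (w + s * (w - ζ) * ζ) * (Q - (1 - (s + c) * ζ)) ∈ Ideal.span {ζ} * J ^ 2 := by
    rw [sq, mul_left_comm]
    exact Ideal.mul_mem_mul (add_mem hw (J.mul_mem_left _ hζ)) hQ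
  have hP' : s * (P + 1) * (ζ * (ζ * (P - 1))) ∈ Ideal.span {ζ} * J ^ 2 :=
    Ideal.mul_mem_left _ _ (hζmul (sq J ▸ Ideal.mul_mem_mul hζ hP))
  have hcubic : s * (s + c) * (ζ * (ζ * (w - ζ))) ∈ Ideal.span {ζ} * J ^ 2 :=
    Ideal.mul_mem_left _ _ (hζmul (sq J ▸ Ideal.mul_mem_mul hζ hwζ))
  convert sub_mem (add_mem (add_mem hE' hQ') hP') hcubic using 1
  ring

end Ideal

lemma exists_differentiable_eq_add_smul {E : Type*} [NormedAddCommGroup E] [NormedSpace ℂ E]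
    [CompleteSpace E] {f : ℂ → E} (hf : Differentiable ℂ f) (c : ℂ) :
    ∃ g : ℂ → E, Differentiable ℂ g ∧ g c = deriv f c ∧ ∀ x, f x = f c + (x - c) • g x := by
  refine ⟨dslope f c, ?_, dslope_same f c, fun x => ?_⟩
  · rw [← differentiableOn_univ] at hf ⊢
    exact (Complex.differentiableOn_dslope univ_mem).2 hf
  · rw [sub_smul_dslope, add_sub_cancel]

lemma exists_differentiable_exp_eq :
    ∃ r : ℂ → ℂ, Differentiable ℂ r ∧ ∀ x, Complex.exp x = 1 + x + x ^ 2 * r x := by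
  obtain ⟨q, hq, hq0, hexp⟩ := exists_differentiable_eq_add_smul Complex.differentiable_exp 0
  obtain ⟨r, hr, -, hqr⟩ := exists_differentiable_eq_add_smul hq 0
  refine ⟨r, hr, fun x => ?_⟩
  rw [hexp, hqr, hq0, Complex.deriv_exp, Complex.exp_zero, sub_zero, smul_eq_mul, smul_eq_mul]
  ring

section EntireFunctions

variable (V : Type*) [NormedAddCommGroup V] [NormedSpace ℂ V]

/-- The algebra of entire functions on a complex normed space `V`, whose ideals express the
error terms `O(ζ², ζw)` with entire coefficients. -/
def entireFunctions : Subalgebra ℂ (V → ℂ) where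
  carrier := {f | Differentiable ℂ f}
  mul_mem' := Differentiable.mul
  add_mem' := Differentiable.add
  algebraMap_mem' c := differentiable_const c

variable {V}

namespace entireFunctions

/-- The exponential `x ↦ exp (f x)` of an entire function, again as an entire function. -/
noncomputable def exp (f : entireFunctions V) : entireFunctions V :=
  ⟨fun x => Complex.exp (f.1 x), f.2.cexp⟩

variable {J : Ideal (entireFunctions V)} {f ζ u : entireFunctions V}

lemma exp_sub_one_add_self_mem_sq (hf : f ∈ J) : exp f - (1 + f) ∈ J ^ 2 := by
  obtain ⟨r, hr, hexp⟩ := exists_differentiable_exp_eq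
  have h : exp f - (1 + f) = f ^ 2 * ⟨fun x => r (f.1 x), hr.comp f.2⟩ :=
    Subtype.ext <| funext fun x => sub_eq_of_eq_add' (hexp (f.1 x))
  exact h ▸ Ideal.mul_mem_right _ _ (Ideal.pow_mem_pow hf 2)

lemma exp_sub_one_mem (hf : f ∈ J) : exp f - 1 ∈ J := by
  have h := J.add_mem (Ideal.pow_le_self two_ne_zero (exp_sub_one_add_self_mem_sq hf)) hf
  rwa [← sub_sub, sub_add_cancel] at h

lemma exp_neg_mul_sub_mem (hζ : ζ ∈ J) (hu : u - 1 ∈ J) (d : entireFunctions V) :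
    exp (-(d * ζ * u)) - (1 - d * ζ) ∈ Ideal.span {ζ} * J := by
  have hζspan : ζ ∈ Ideal.span {ζ} := Ideal.mem_span_singleton_self ζ
  have hexp : exp (-(d * ζ * u)) - (1 + -(d * ζ * u)) ∈ Ideal.span {ζ} * J := by
    have hmem : -(d * ζ * u) ∈ Ideal.span {ζ} :=
      neg_mem (Ideal.mul_mem_right _ _ (Ideal.mul_mem_left _ _ hζspan))
    have h := exp_sub_one_add_self_mem_sq hmem
    rw [sq] at h
    exact Ideal.mul_mono_right ((Ideal.span_singleton_le_iff_mem J).2 hζ) h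
  have hlin : -d * (ζ * (u - 1)) ∈ Ideal.span {ζ} * J :=
    Ideal.mul_mem_left _ _ (Ideal.mul_mem_mul hζspan hu)
  convert add_mem hexp hlin using 1
  ring

end entireFunctions

end EntireFunctions

open entireFunctions in
lemma exists_entireFunctions_Fmap_eq (a b c : ℂ) :
    ∃ h₁ h₂ h₃ h₄ h₅ h₆ h₇ : entireFunctions (ℂ × ℂ × ℂ), ∀ z t w : ℂ,
      Fmap a b c (z, t, w) =
        (z * (1 - a * (z * t) + (z * t) ^ 2 * h₁.1 (z, t, w) + (z * t) * w * h₂.1 (z, t, w)),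
         t * (1 - b * (z * t) + (z * t) ^ 2 * h₃.1 (z, t, w) + (z * t) * w * h₄.1 (z, t, w)),
         w * (1 - c * (z * t) + (z * t) ^ 2 * h₅.1 (z, t, w) + (z * t) * w * h₆.1 (z, t, w)) +
           (z * t) ^ 3 * h₇.1 (z, t, w)) := by
  let const : ℂ →+* entireFunctions (ℂ × ℂ × ℂ) := algebraMap ℂ _
  let ζ : entireFunctions (ℂ × ℂ × ℂ) :=
    ⟨fun p => p.1 * p.2.1, differentiable_fst.mul differentiable_snd.fst⟩
  let ω : entireFunctions (ℂ × ℂ × ℂ) := ⟨fun p => p.2.2, differentiable_snd.snd⟩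
  let J : Ideal (entireFunctions (ℂ × ℂ × ℂ)) := Ideal.span {ζ, ω}
  let s := const a + const b
  let E := exp (s * (ω - ζ))
  let P := exp (-(s * ζ * E))
  have hζ : ζ ∈ J := Ideal.mem_span_pair.2 ⟨1, 0, by ring⟩
  have hω : ω ∈ J := Ideal.mem_span_pair.2 ⟨0, 1, by ring⟩
  have hu : s * (ω - ζ) ∈ J := J.mul_mem_left s (sub_mem hω hζ)
  have hE : E - 1 ∈ J := exp_sub_one_mem hu
  have hP : P - 1 ∈ J := exp_sub_one_mem (neg_mem (J.mul_mem_right _ (J.mul_mem_left _ hζ)))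
  obtain ⟨h₁, h₂, e₁⟩ := mem_span_singleton_mul_span_pair.1 (exp_neg_mul_sub_mem hζ hE (const a))
  obtain ⟨h₃, h₄, e₂⟩ := mem_span_singleton_mul_span_pair.1 (exp_neg_mul_sub_mem hζ hE (const b))
  obtain ⟨h₅, h₆, h₇, e₃⟩ := mem_span_singleton_mul_span_pair_sq.1 <|
    third_component_sub_mem hζ hω (exp_sub_one_add_self_mem_sq hu) hP
      (exp_neg_mul_sub_mem hζ hP (s + const c))
  refine ⟨h₁, h₂, h₃, h₄, h₅, h₆, h₇, fun z t w => ?_⟩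
  have eval {f g : entireFunctions (ℂ × ℂ × ℂ)} (h : f = g) : f.1 (z, t, w) = g.1 (z, t, w) :=
    congrArg (fun f => f.1 (z, t, w)) h
  rw [Fmap_apply a b c z t w (E := E.1 (z, t, w)) (P := P.1 (z, t, w)) rfl rfl]
  refine Prod.ext (congrArg (z * ·) ?_) (Prod.ext (congrArg (t * ·) ?_) ?_)
  · exact (sub_eq_iff_eq_add'.1 (eval e₁)).trans (add_assoc _ _ _).symm
  · exact (sub_eq_iff_eq_add'.1 (eval e₂)).trans (add_assoc _ _ _).symm
  · refine (sub_eq_iff_eq_add'.1 (eval e₃)).trans ?_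
    change w * (1 - c * (z * t)) + (w * ((z * t) ^ 2 * h₅.1 (z, t, w) +
      (z * t) * w * h₆.1 (z, t, w)) + (z * t) ^ 3 * h₇.1 (z, t, w)) = _
    ring

lemma hasFDerivAt_mul_of_left_eq_zero {𝕜 E : Type*} [NontriviallyNormedField 𝕜]
    [NormedAddCommGroup E] [NormedSpace 𝕜 E] {f g : E → 𝕜} {f' : E →L[𝕜] 𝕜} {x : E}
    (hf : HasFDerivAt f f' x) (hg : DifferentiableAt 𝕜 g x) (hx : f x = 0) :
    HasFDerivAt (fun y => f y * g y) (g x • f') x := by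
  refine (hf.mul hg.hasFDerivAt).congr_fderiv ?_
  ext v
  simp [hx]

lemma hasFDerivAt_id_of_coord_mul {g₁ g₂ g₃ k : ℂ × ℂ × ℂ → ℂ} (hg₁ : DifferentiableAt ℂ g₁ 0)
    (hg₂ : DifferentiableAt ℂ g₂ 0) (hg₃ : DifferentiableAt ℂ g₃ 0) (hk : DifferentiableAt ℂ k 0)
    (hg₁_zero : g₁ 0 = 1) (hg₂_zero : g₂ 0 = 1) (hg₃_zero : g₃ 0 = 1) (hk_zero : k 0 = 0) :
    HasFDerivAt (fun p : ℂ × ℂ × ℂ => (p.1 * g₁ p, p.2.1 * g₂ p, p.2.2 * g₃ p + p.1 * k p))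
      (ContinuousLinearMap.id ℂ (ℂ × ℂ × ℂ)) 0 := by
  have h₁ := hasFDerivAt_mul_of_left_eq_zero hasFDerivAt_fst hg₁ rfl
  have h₂ := hasFDerivAt_mul_of_left_eq_zero hasFDerivAt_snd.fst hg₂ rfl
  have h₃ := hasFDerivAt_mul_of_left_eq_zero hasFDerivAt_snd.snd hg₃ rfl
  have h₄ := hasFDerivAt_mul_of_left_eq_zero hasFDerivAt_fst hk rfl
  refine (h₁.prodMk (h₂.prodMk (h₃.add h₄))).congr_fderiv ?_
  rw [hg₁_zero, hg₂_zero, hg₃_zero, hk_zero]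
  ext <;> simp

lemma hasFDerivAt_Fmap_zero (a b c : ℂ) :
    HasFDerivAt (Fmap a b c) (ContinuousLinearMap.id ℂ (ℂ × ℂ × ℂ)) 0 := by
  obtain ⟨⟨h₁, d₁⟩, ⟨h₂, d₂⟩, ⟨h₃, d₃⟩, ⟨h₄, d₄⟩, ⟨h₅, d₅⟩, ⟨h₆, d₆⟩, ⟨h₇, d₇⟩, hF⟩ :=
    exists_entireFunctions_Fmap_eq a b c
  change Differentiable ℂ _ at d₁ d₂ d₃ d₄ d₅ d₆ d₇
  have h := hasFDerivAt_id_of_coord_mul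
    (g₁ := fun p => 1 - a * (p.1 * p.2.1) + (p.1 * p.2.1) ^ 2 * h₁ p + p.1 * p.2.1 * p.2.2 * h₂ p)
    (g₂ := fun p => 1 - b * (p.1 * p.2.1) + (p.1 * p.2.1) ^ 2 * h₃ p + p.1 * p.2.1 * p.2.2 * h₄ p)
    (g₃ := fun p => 1 - c * (p.1 * p.2.1) + (p.1 * p.2.1) ^ 2 * h₅ p + p.1 * p.2.1 * p.2.2 * h₆ p)
    (k := fun p => p.1 ^ 2 * p.2.1 ^ 3 * h₇ p)
    (by fun_prop) (by fun_prop) (by fun_prop) (by fun_prop)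
    (by simp) (by simp) (by simp) (by simp)
  convert h using 1
  funext ⟨z, t, w⟩
  rw [hF]
  ring_nf

/-- For nonzero `a, b, c`, the map `F = φ₃ ∘ φ₂⁻¹ ∘ φ₁⁻¹ ∘ φ₂ ∘ φ₁` is a
holomorphic automorphism of `ℂ³` tangent to the identity at the origin, and its components
have the form `F₁ = z(1 − aζ + O(ζ², ζw))`, `F₂ = t(1 − bζ + O(ζ², ζw))`,
`F₃ = w(1 − cζ + O(ζ², ζw)) + O(ζ³)` with `ζ = zt`. -/
theorem Fmap_form (a b c : ℂ) (ha : a ≠ 0) (hb : b ≠ 0) (hc : c ≠ 0) :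
    Differentiable ℂ (Fmap a b c) ∧ Function.Bijective (Fmap a b c) ∧
    (∃ Finv : ℂ × ℂ × ℂ → ℂ × ℂ × ℂ, Differentiable ℂ Finv ∧
      Function.LeftInverse Finv (Fmap a b c) ∧ Function.RightInverse Finv (Fmap a b c)) ∧
    Fmap a b c 0 = 0 ∧
    fderiv ℂ (Fmap a b c) 0 = ContinuousLinearMap.id ℂ (ℂ × ℂ × ℂ) ∧
    ∃ h₁ h₂ h₃ h₄ h₅ h₆ h₇ : ℂ × ℂ × ℂ → ℂ,
      Differentiable ℂ h₁ ∧ Differentiable ℂ h₂ ∧ Differentiable ℂ h₃ ∧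
      Differentiable ℂ h₄ ∧ Differentiable ℂ h₅ ∧ Differentiable ℂ h₆ ∧
      Differentiable ℂ h₇ ∧
      ∀ z t w : ℂ,
        Fmap a b c (z, t, w) =
          (z * (1 - a * (z * t) + (z * t) ^ 2 * h₁ (z, t, w) +
              (z * t) * w * h₂ (z, t, w)),
           t * (1 - b * (z * t) + (z * t) ^ 2 * h₃ (z, t, w) +
              (z * t) * w * h₄ (z, t, w)),
           w * (1 - c * (z * t) + (z * t) ^ 2 * h₅ (z, t, w) +
              (z * t) * w * h₆ (z, t, w)) + (z * t) ^ 3 * h₇ (z, t, w)) := by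
  obtain ⟨Finv, hF⟩ := exists_isBiholomorphicPair_Fmap a b c
  obtain ⟨h₁, h₂, h₃, h₄, h₅, h₆, h₇, hform⟩ := exists_entireFunctions_Fmap_eq a b c
  have hzero : Fmap a b c 0 = 0 := (hform 0 0 0).trans (by simp)
  exact ⟨hF.differentiable, hF.bijective,
    ⟨Finv, hF.differentiable_inv, hF.leftInverse, hF.rightInverse⟩,
    hzero, (hasFDerivAt_Fmap_zero a b c).fderiv,
    h₁, h₂, h₃, h₄, h₅, h₆, h₇, h₁.2, h₂.2, h₃.2, h₄.2, h₅.2, h₆.2, h₇.2, hform⟩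
end

section
/- For any nonzero complex numbers a, b, c and any λ ∈ ℂ*, the map F = φ₃ ∘ φ₂⁻¹ ∘ φ₁⁻¹ ∘ φ₂ ∘ φ₁ commutes with the torus action T_λ(z,t,w) = (λz, t/λ, w), i.e. F ∘ T_λ = T_λ ∘ F on ℂ* × ℂ* × ℂ (equivalently, writing F = (F₁,F₂,F₃), one has F₁(λz, t/λ, w) = λ·F₁(z,t,w), F₂(λz, t/λ, w) = F₂(z,t,w)/λ, and F₃(λz, t/λ, w) = F₃(z,t,w)). -/
/-!
The product `zt` and the coordinate `w` are invariant under `T_λ(z,t,w) = (λz, t/λ, w)`, that is,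
`π ∘ T_λ = π`. Hence `T_λ` commutes with every map that multiplies `z` and `t` by functions of
`π(z,t,w)` and replaces `w` by a function of `π(z,t,w)`. Each of the five factors of `F` has this
form, and maps commuting with `T_λ` are closed under composition.
-/

open Filter Set

/-- The torus action `T_λ(z,t,w) = (λz, t/λ, w)`, with `ℂ*` encoded as the group of units `ℂˣ`. -/
noncomputable def torusAct (lam : ℂˣ) (p : ℂ × ℂ × ℂ) : ℂ × ℂ × ℂ :=
  (lam * p.1, p.2.1 / lam, p.2.2)

theorem πmap_torusAct (lam : ℂˣ) (p : ℂ × ℂ × ℂ) : πmap (torusAct lam p) = πmap p := by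
  have h : lam * p.1 * (p.2.1 / lam) = p.1 * p.2.1 := by field_simp
  exact Prod.ext h rfl

theorem commute_torusAct_of_eq_πmap {φ : ℂ × ℂ × ℂ → ℂ × ℂ × ℂ} (f g h : ℂ × ℂ → ℂ)
    (hφ : ∀ p, φ p = (p.1 * f (πmap p), p.2.1 * g (πmap p), h (πmap p))) (lam : ℂˣ) :
    Function.Commute φ (torusAct lam) := by
  intro p
  rw [hφ, hφ, πmap_torusAct]
  simp only [torusAct, mul_assoc, div_mul_eq_mul_div]

theorem commute_φ₁_torusAct (lam : ℂˣ) : Function.Commute φ₁ (torusAct lam) :=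
  commute_torusAct_of_eq_πmap 1 1 (fun q ↦ q.2 - q.1)
    (fun p ↦ by simp only [φ₁, πmap, Pi.one_apply, mul_one]) lam

theorem commute_φ₁inv_torusAct (lam : ℂˣ) : Function.Commute φ₁inv (torusAct lam) :=
  commute_torusAct_of_eq_πmap 1 1 (fun q ↦ q.2 + q.1)
    (fun p ↦ by simp only [φ₁inv, πmap, Pi.one_apply, mul_one]) lam

theorem commute_φ₂_torusAct (a b : ℂ) (lam : ℂˣ) : Function.Commute (φ₂ a b) (torusAct lam) :=
  commute_torusAct_of_eq_πmap (fun q ↦ Complex.exp (a * q.2)) (fun q ↦ Complex.exp (b * q.2))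
    Prod.snd (fun _ ↦ rfl) lam

theorem commute_φ₂inv_torusAct (a b : ℂ) (lam : ℂˣ) :
    Function.Commute (φ₂inv a b) (torusAct lam) :=
  commute_torusAct_of_eq_πmap (fun q ↦ Complex.exp (-(a * q.2)))
    (fun q ↦ Complex.exp (-(b * q.2))) Prod.snd (fun _ ↦ rfl) lam

theorem commute_φ₃_torusAct (a b c : ℂ) (lam : ℂˣ) :
    Function.Commute (φ₃ a b c) (torusAct lam) :=
  commute_torusAct_of_eq_πmap 1 1
    (fun q ↦ q.2 * Complex.exp (-((a + b + c) * q.1)) + (a + b) * q.1 ^ 2)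
    (fun p ↦ by simp only [φ₃, πmap, Pi.one_apply, mul_one, mul_pow, mul_assoc]) lam

/-- For nonzero `a, b, c` and any `λ ∈ ℂ*`, the map `F` commutes with the torus
action `T_λ(z,t,w) = (λz, t/λ, w)`:  `F₁(λz, t/λ, w) = λ·F₁(z,t,w)`,
`F₂(λz, t/λ, w) = F₂(z,t,w)/λ` and `F₃(λz, t/λ, w) = F₃(z,t,w)`. -/
theorem Fmap_torus_equivariant (a b c : ℂ) (ha : a ≠ 0) (hb : b ≠ 0) (hc : c ≠ 0)
    (lam : ℂ) (hlam : lam ≠ 0) :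
    ∀ z t w : ℂ,
      Fmap a b c (lam * z, t / lam, w) =
        (lam * (Fmap a b c (z, t, w)).1,
         (Fmap a b c (z, t, w)).2.1 / lam,
         (Fmap a b c (z, t, w)).2.2) := by
  intro z t w
  let u : ℂˣ := Units.mk0 lam hlam
  have hF : Function.Commute (Fmap a b c) (torusAct u) :=
    (commute_φ₃_torusAct a b c u).comp_left <|
      (commute_φ₂inv_torusAct a b u).comp_left <|
        (commute_φ₁inv_torusAct u).comp_left <|
          (commute_φ₂_torusAct a b u).comp_left (commute_φ₁_torusAct u)
  exact hF (z, t, w)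
end

section
/- Let a, b, c be nonzero complex numbers. Every point of the basin of attraction Ω of F avoids the analytic set {zt = 0}: if (z, t, w) ∈ Ω then z·t ≠ 0. -/
open Filter Set

open Function

theorem eq_of_isFixedPt_of_tendsto_iterate {X : Type*} [TopologicalSpace X] [T1Space X]
    {f : X → X} {x y : X} (hx : IsFixedPt f x) (h : Tendsto (fun n ↦ f^[n] x) atTop (nhds y)) :
    x = y := by
  simp only [iterate_fixed hx] at h
  exact tendsto_const_nhds_iff.mp h

theorem isFixedPt_φ₁_iff {p : ℂ × ℂ × ℂ} : IsFixedPt φ₁ p ↔ p.1 * p.2.1 = 0 := by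
  simp [IsFixedPt, φ₁, Prod.ext_iff]

theorem isFixedPt_φ₁inv_iff {p : ℂ × ℂ × ℂ} : IsFixedPt φ₁inv p ↔ p.1 * p.2.1 = 0 := by
  simp [IsFixedPt, φ₁inv, Prod.ext_iff]

theorem φ₂_fst_mul_snd_fst_eq_zero_iff {a b : ℂ} {p : ℂ × ℂ × ℂ} :
    (φ₂ a b p).1 * (φ₂ a b p).2.1 = 0 ↔ p.1 * p.2.1 = 0 := by
  simp [φ₂]

theorem leftInverse_φ₂inv_φ₂ (a b : ℂ) : LeftInverse (φ₂inv a b) (φ₂ a b) := fun p ↦ by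
  simp [φ₂inv, φ₂, mul_assoc, ← Complex.exp_add]

theorem isFixedPt_φ₃_of_mul_eq_zero (a b c : ℂ) {p : ℂ × ℂ × ℂ} (hp : p.1 * p.2.1 = 0) :
    IsFixedPt (φ₃ a b c) p := by
  simp [IsFixedPt, φ₃, mul_assoc, ← mul_pow, hp]

theorem isFixedPt_Fmap_of_mul_eq_zero (a b c : ℂ) {p : ℂ × ℂ × ℂ} (hp : p.1 * p.2.1 = 0) :
    IsFixedPt (Fmap a b c) p :=
  calc
    Fmap a b c p = φ₃ a b c (φ₂inv a b (φ₁inv (φ₂ a b (φ₁ p)))) := rfl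
    _ = φ₃ a b c (φ₂inv a b (φ₁inv (φ₂ a b p))) := by rw [isFixedPt_φ₁_iff.mpr hp]
    _ = φ₃ a b c (φ₂inv a b (φ₂ a b p)) := by
      rw [isFixedPt_φ₁inv_iff.mpr (φ₂_fst_mul_snd_fst_eq_zero_iff.mpr hp)]
    _ = φ₃ a b c p := by rw [leftInverse_φ₂inv_φ₂ a b p]
    _ = p := isFixedPt_φ₃_of_mul_eq_zero a b c hp

theorem notMem_basinF_of_isFixedPt {a b c : ℂ} {p : ℂ × ℂ × ℂ} (hp : IsFixedPt (Fmap a b c) p) :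
    p ∉ basinF a b c :=
  fun ⟨p_ne_zero, tendsto_zero⟩ ↦ p_ne_zero (eq_of_isFixedPt_of_tendsto_iterate hp tendsto_zero)

/-- For nonzero `a, b, c`, every point of the basin of attraction `Ω` of `F`
avoids the analytic set `{zt = 0}`: if `(z, t, w) ∈ Ω` then `z·t ≠ 0`. -/
theorem basinF_avoids_zt_zero (a b c : ℂ) (ha : a ≠ 0) (hb : b ≠ 0) (hc : c ≠ 0)
    (z t w : ℂ) (hmem : (z, t, w) ∈ basinF a b c) : z * t ≠ 0 := by
  intro hzt
  exact notMem_basinF_of_isFixedPt (isFixedPt_Fmap_of_mul_eq_zero a b c hzt) hmem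
end

section
/- For any nonzero complex numbers a, b, c, there exists a holomorphic map G : ℂ² → ℂ² such that π ∘ F = G ∘ π, where π : ℂ³ → ℂ² is defined by π(z, t, w) = (zt, w); explicitly, G(zt, w) = (F₁(z,t,w)·F₂(z,t,w), F₃(z,t,w)) for all (z,t,w) ∈ ℂ³. -/
/-!
Each factor of `F` permutes the fibres of `π`: `φ₁`, `φ₁⁻¹` and `φ₃` fix `z` and `t` and change `w`
by a function of `(zt, w)` only, while `φ₂` and `φ₂⁻¹` fix `w` and multiply `zt` by `e^{±(a+b)w}`.
Hence each factor descends along `π` to an overshear of `ℂ²`, and `F` descends to their composition.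
-/

open Filter Set

/-- The overshear `(u, w) ↦ (u·e^{f(w)}, w)` of `ℂ²` in the first coordinate, without additive
term. The maps `φ₂` and `φ₂⁻¹` descend along `π` to overshears of this kind. -/
noncomputable def overshearFst (f : ℂ → ℂ) (q : ℂ × ℂ) : ℂ × ℂ :=
  (q.1 * Complex.exp (f q.2), q.2)

/-- The overshear `(u, w) ↦ (u, w·e^{f(u)} + g(u))` of `ℂ²` in the second coordinate, a shear when
`f = 0`. The maps `φ₁`, `φ₁⁻¹` and `φ₃` descend along `π` to overshears of this kind. -/
noncomputable def overshearSnd (f g : ℂ → ℂ) (q : ℂ × ℂ) : ℂ × ℂ :=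
  (q.1, q.2 * Complex.exp (f q.1) + g q.1)

theorem differentiable_overshearFst {f : ℂ → ℂ} (hf : Differentiable ℂ f) :
    Differentiable ℂ (overshearFst f) := by
  unfold overshearFst
  fun_prop

theorem differentiable_overshearSnd {f g : ℂ → ℂ} (hf : Differentiable ℂ f)
    (hg : Differentiable ℂ g) : Differentiable ℂ (overshearSnd f g) := by
  unfold overshearSnd
  fun_prop

theorem semiconj_πmap_φ₁ : Function.Semiconj πmap φ₁ (overshearSnd 0 fun u => -u) := fun p => by
  simp [πmap, φ₁, overshearSnd, sub_eq_add_neg]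

theorem semiconj_πmap_φ₁inv : Function.Semiconj πmap φ₁inv (overshearSnd 0 fun u => u) :=
  fun p => by simp [πmap, φ₁inv, overshearSnd]

theorem semiconj_πmap_φ₂ (a b : ℂ) :
    Function.Semiconj πmap (φ₂ a b) (overshearFst fun w => (a + b) * w) := fun p => by
  simp only [πmap, φ₂, overshearFst, add_mul, Complex.exp_add, mul_mul_mul_comm]

theorem φ₂inv_eq_φ₂_neg (a b : ℂ) : φ₂inv a b = φ₂ (-a) (-b) := by
  funext p
  simp only [φ₂inv, φ₂, neg_mul]

theorem semiconj_πmap_φ₂inv (a b : ℂ) :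
    Function.Semiconj πmap (φ₂inv a b) (overshearFst fun w => (-a + -b) * w) :=
  φ₂inv_eq_φ₂_neg a b ▸ semiconj_πmap_φ₂ (-a) (-b)

theorem semiconj_πmap_φ₃ (a b c : ℂ) :
    Function.Semiconj πmap (φ₃ a b c)
      (overshearSnd (fun u => -((a + b + c) * u)) fun u => (a + b) * u ^ 2) := fun p => by
  simp only [πmap, φ₃, overshearSnd, mul_pow, mul_assoc]

/-- The holomorphic map `G` of `ℂ²` to which `F` descends along `π`, with one overshear for each of
the five factors of `F`. -/
noncomputable def Gmap (a b c : ℂ) : ℂ × ℂ → ℂ × ℂ :=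
  overshearSnd (fun u => -((a + b + c) * u)) (fun u => (a + b) * u ^ 2) ∘
    overshearFst (fun w => (-a + -b) * w) ∘ overshearSnd 0 (fun u => u) ∘
      overshearFst (fun w => (a + b) * w) ∘ overshearSnd 0 (fun u => -u)

theorem differentiable_Gmap (a b c : ℂ) : Differentiable ℂ (Gmap a b c) :=
  (differentiable_overshearSnd (by fun_prop) (by fun_prop)).comp <|
    (differentiable_overshearFst (by fun_prop)).comp <|
      (differentiable_overshearSnd (by fun_prop) (by fun_prop)).comp <|
        (differentiable_overshearFst (by fun_prop)).comp <|
          differentiable_overshearSnd (by fun_prop) (by fun_prop)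

theorem semiconj_πmap_Fmap (a b c : ℂ) : Function.Semiconj πmap (Fmap a b c) (Gmap a b c) :=
  (semiconj_πmap_φ₃ a b c).comp_right <| (semiconj_πmap_φ₂inv a b).comp_right <|
    semiconj_πmap_φ₁inv.comp_right <| (semiconj_πmap_φ₂ a b).comp_right semiconj_πmap_φ₁

/-- For nonzero `a, b, c`, there exists a holomorphic `G : ℂ² → ℂ²` with
`π ∘ F = G ∘ π`, where `π(z,t,w) = (zt, w)`; explicitly
`G(zt, w) = (F₁·F₂, F₃)(z,t,w)` for all `(z,t,w)`. -/
theorem exists_semiconjugate (a b c : ℂ) (ha : a ≠ 0) (hb : b ≠ 0) (hc : c ≠ 0) :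
    ∃ G : ℂ × ℂ → ℂ × ℂ, Differentiable ℂ G ∧
      (∀ p : ℂ × ℂ × ℂ, πmap (Fmap a b c p) = G (πmap p)) ∧
      (∀ z t w : ℂ,
        G (z * t, w) =
          ((Fmap a b c (z, t, w)).1 * (Fmap a b c (z, t, w)).2.1,
           (Fmap a b c (z, t, w)).2.2)) :=
  ⟨Gmap a b c, differentiable_Gmap a b c, semiconj_πmap_Fmap a b c,
    fun z t w => (semiconj_πmap_Fmap a b c (z, t, w)).symm⟩
end
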